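/- arXiv:2304.04001 — 17 statements merged into one kernel-verified Lean document; each statement's English description precedes it below -/
import Mathlib

section
/- Suppose D ≠ 0, and let α, β ∈ ℂ be the two distinct roots of t² - (1+c)t + (c - ab) = 0, i.e. α = (1+c+√D)/2, β = (1+c-√D)/2 (complex square root when D < 0). Then for every n ≥ 1 and every x ∈ ℝ \ 𝒫, the n-th iterate satisfies f^n(x) = 1/b + ((ab - c)/b) · [ (bx - 1 + α)α^{n-1} - (bx - 1 + β)β^{n-1} ] / [ (bx - 1 + α)α^{n} - (bx - 1 + β)β^{n} ], the denominator being nonzero. -/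
/-- Solutions of `u (n + 2) = (1 + c) * u (n + 1) - (c - a * b) * u n` linearise the map
`y ↦ (y + a) / (b * y + c)`: along an orbit `y` that avoids the pole, the ratio
`u (n + 1) / u n` is the denominator `b * y n + c`. -/
theorem linear_recurrence_succ_eq_denom_mul {K : Type*} [Field K] {a b c : K} {u y : ℕ → K}
    (hu : ∀ n, u (n + 2) = (1 + c) * u (n + 1) - (c - a * b) * u n)
    (hy : ∀ n, y (n + 1) = (y n + a) / (b * y n + c)) (hne : ∀ n, b * y n + c ≠ 0)
    (h0 : u 1 = (b * y 0 + c) * u 0) (n : ℕ) : u (n + 1) = (b * y n + c) * u n := by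
  induction n with
  | zero => exact h0
  | succ n ih =>
    have h : y (n + 1) * (b * y n + c) = y n + a := by rw [hy, div_mul_cancel₀ _ (hne n)]
    rw [hu, ih]
    linear_combination (-(b * u n)) * h

/-- Fix `a b c : ℝ` with `b ≠ 0`, `c ≠ a*b`, `f x = (x+a)/(b*x+c)`,
`𝒫 = {x | ∃ n, f^[n] x = -c/b}`, `D = (c-1)^2 + 4*a*b`. Suppose `D ≠ 0` and let
`α = (1+c+s)/2`, `β = (1+c-s)/2 ∈ ℂ` where `s` is a (complex) square root of `D`
(so that `α, β` are the two distinct roots of `t² - (1+c)t + (c - ab) = 0`).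
Then for every `n ≥ 1` and every `x ∈ ℝ \ 𝒫` the denominator
`(b*x-1+α)*α^n - (b*x-1+β)*β^n` is nonzero and
`f^[n] x = 1/b + ((a*b-c)/b) * ((b*x-1+α)*α^(n-1) - (b*x-1+β)*β^(n-1)) /
  ((b*x-1+α)*α^n - (b*x-1+β)*β^n)`. -/
theorem stmt1 (a b c : ℝ) (hb : b ≠ 0) (hc : c ≠ a * b)
    (f : ℝ → ℝ) (hf : ∀ x, f x = (x + a) / (b * x + c))
    (P : Set ℝ) (hP : P = {x : ℝ | ∃ n : ℕ, f^[n] x = -c / b})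
    (D : ℝ) (hD : D = (c - 1) ^ 2 + 4 * a * b) (hD0 : D ≠ 0)
    (s α β : ℂ) (hs : s ^ 2 = (D : ℂ))
    (hα : α = (1 + (c : ℂ) + s) / 2) (hβ : β = (1 + (c : ℂ) - s) / 2) :
    ∀ n : ℕ, 1 ≤ n → ∀ x : ℝ, x ∉ P →
      (((b : ℂ) * x - 1 + α) * α ^ n - ((b : ℂ) * x - 1 + β) * β ^ n ≠ 0) ∧
      ((f^[n] x : ℝ) : ℂ) = 1 / (b : ℂ) + (((a : ℂ) * b - c) / b) *
        ((((b : ℂ) * x - 1 + α) * α ^ (n - 1) - ((b : ℂ) * x - 1 + β) * β ^ (n - 1)) /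
         (((b : ℂ) * x - 1 + α) * α ^ n - ((b : ℂ) * x - 1 + β) * β ^ n)) := by
  intro n hn x hx
  obtain ⟨m, rfl⟩ := Nat.exists_eq_add_of_le' hn
  have hbC : (b : ℂ) ≠ 0 := by exact_mod_cast hb
  have hsq : s ^ 2 = ((c : ℂ) - 1) ^ 2 + 4 * a * b := by rw [hs, hD]; push_cast; ring
  have hs0 : s ≠ 0 := by
    rintro rfl
    exact hD0 (by simpa using hs.symm)
  have hαsq : α ^ 2 = (1 + c) * α - (c - a * b) := by
    rw [hα]; linear_combination hsq / 4
  have hβsq : β ^ 2 = (1 + c) * β - (c - a * b) := by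
    rw [hβ]; linear_combination hsq / 4
  have hne (k : ℕ) : (b : ℂ) * (f^[k] x : ℝ) + c ≠ 0 := by
    intro h
    have h' : b * f^[k] x + c = 0 := by exact_mod_cast h
    refine hx (hP ▸ ⟨k, ?_⟩)
    rw [eq_div_iff hb]
    linear_combination h'
  have hy (k : ℕ) : ((f^[k + 1] x : ℝ) : ℂ) =
      ((f^[k] x : ℝ) + a) / (b * (f^[k] x : ℝ) + c) := by
    rw [Function.iterate_succ_apply', hf]; push_cast; rfl
  set u : ℕ → ℂ := fun k ↦ ((b : ℂ) * x - 1 + α) * α ^ k - ((b : ℂ) * x - 1 + β) * β ^ k with hu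
  have hu0 : u 0 ≠ 0 := by
    have : u 0 = s := by simp only [hu, hα, hβ]; ring
    rwa [this]
  have hstep := linear_recurrence_succ_eq_denom_mul (a := (a : ℂ)) (b := b) (c := c) (u := u)
    (y := fun k ↦ ((f^[k] x : ℝ) : ℂ))
    (fun k ↦ by
      simp only [hu]
      linear_combination ((b : ℂ) * x - 1 + α) * α ^ k * hαsq -
        ((b : ℂ) * x - 1 + β) * β ^ k * hβsq)
    hy hne (by simp only [hu, hα, hβ, Function.iterate_zero, id]; ring)
  have hune (k : ℕ) : u k ≠ 0 := by
    induction k with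
    | zero => exact hu0
    | succ k ih => rw [hstep]; exact mul_ne_zero (hne k) ih
  refine ⟨hune (m + 1), ?_⟩
  change _ = 1 / (b : ℂ) + (((a : ℂ) * b - c) / b) * (u m / u (m + 1))
  have hm := hune m
  have hd := hne m
  rw [hstep, hy]
  rw [mul_comm (b : ℂ)] at hd ⊢
  field_simp
  ring
end

section
/- Suppose D = 0 and set α = (1+c)/2 (the double root of t² - (1+c)t + (c - ab) = 0). Then for every n ≥ 1 and every x ∈ ℝ \ 𝒫, the n-th iterate satisfies f^n(x) = 1/b + ((ab - c)/b) · [ (bx - 1)(n - 1) + nα ] / [ α( (bx - 1)n + (n + 1)α ) ], the denominator being nonzero. -/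
/-- The parabolic map `v ↦ -α² / (v + 2α)` in the coordinate `v = b * x - 1`: as long as the
orbit `v` of `u` avoids the pole `-2α`, its `n`-th term is given by a closed formula. -/
lemma parabolic_orbit_closed_form {α u : ℝ} (hα : α ≠ 0) {v : ℕ → ℝ} (h0 : v 0 = u)
    (hpole : ∀ n, v n + 2 * α ≠ 0) (hstep : ∀ n, v (n + 1) = -α ^ 2 / (v n + 2 * α)) (n : ℕ) :
    u * n + (n + 1) * α ≠ 0 ∧
      v n = -α * (u * ((n : ℝ) - 1) + n * α) / (u * n + (n + 1) * α) := by
  induction n with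
  | zero => simp [h0, hα]
  | succ n ih =>
    obtain ⟨hd, hv⟩ := ih
    have key : v n + 2 * α =
        α * (u * (n + 1) + (n + 1 + 1) * α) / (u * n + (n + 1) * α) := by
      rw [hv, eq_div_iff hd, add_mul, div_mul_cancel₀ _ hd]
      ring
    have hd' : u * ((n : ℝ) + 1) + (n + 1 + 1) * α ≠ 0 := fun h =>
      hpole n (by rw [key, h]; simp)
    push_cast
    refine ⟨hd', ?_⟩
    rw [hstep, key]
    field_simp
    ring

/-- Fix `a b c : ℝ` with `b ≠ 0`, `c ≠ a*b`, `f x = (x+a)/(b*x+c)`,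
`𝒫 = {x | ∃ n, f^[n] x = -c/b}`, `D = (c-1)^2 + 4*a*b`. Suppose `D = 0` and set
`α = (1+c)/2` (the double root of `t² - (1+c)t + (c-ab) = 0`). Then for every `n ≥ 1`
and every `x ∈ ℝ \ 𝒫` the denominator `α*((b*x-1)*n + (n+1)*α)` is nonzero and
`f^[n] x = 1/b + ((a*b-c)/b) * ((b*x-1)*(n-1) + n*α) / (α*((b*x-1)*n + (n+1)*α))`. -/
theorem stmt2 (a b c : ℝ) (hb : b ≠ 0) (hc : c ≠ a * b)
    (f : ℝ → ℝ) (hf : ∀ x, f x = (x + a) / (b * x + c))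
    (P : Set ℝ) (hP : P = {x : ℝ | ∃ n : ℕ, f^[n] x = -c / b})
    (hD : (c - 1) ^ 2 + 4 * a * b = 0)
    (α : ℝ) (hα : α = (1 + c) / 2) :
    ∀ n : ℕ, 1 ≤ n → ∀ x : ℝ, x ∉ P →
      (α * ((b * x - 1) * n + (n + 1) * α) ≠ 0) ∧
      f^[n] x = 1 / b + ((a * b - c) / b) *
        (((b * x - 1) * ((n : ℝ) - 1) + n * α) /
         (α * ((b * x - 1) * n + (n + 1) * α))) := by
  intro n _ x hx
  have hsq : c - a * b = α ^ 2 := by rw [hα]; linarith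
  have hα0 : α ≠ 0 := by
    rintro rfl
    exact hc (by linarith)
  have hden : ∀ k, b * f^[k] x + c ≠ 0 := fun k h =>
    hx (hP ▸ ⟨k, by rw [eq_div_iff hb]; linarith⟩)
  have hshift : ∀ k, b * f^[k] x - 1 + 2 * α = b * f^[k] x + c := fun k => by
    rw [hα]; ring
  obtain ⟨hd, hv⟩ := parabolic_orbit_closed_form hα0 (u := b * x - 1)
    (v := fun k => b * f^[k] x - 1) rfl (fun k => by simpa only [hshift] using hden k)
    (fun k => by
      have hk := hden k
      simp only [hshift, Function.iterate_succ_apply', hf (f^[k] x), ← hsq]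
      field_simp
      ring) n
  refine ⟨mul_ne_zero hα0 hd, ?_⟩
  have hab : a * b - c = -α ^ 2 := by linarith
  have hfn : f^[n] x = (1 + (b * f^[n] x - 1)) / b := by field_simp; ring
  rw [hfn, hv, hab]
  field_simp
end

section
/- Define sequences a_q, b_q, c_q, d_q by a₁ = 1, b₁ = a, c₁ = b, d₁ = c and a_{q+1} = a_q + b·b_q, b_{q+1} = a·a_q + c·b_q, c_{q+1} = c_q + b·d_q, d_{q+1} = a·c_q + c·d_q. Then for every q ≥ 1: (i) f^q(x) = (a_q x + b_q)/(c_q x + d_q) for all x ∈ ℝ \ 𝒫; (ii) c_q = b·K_q, d_q - a_q = (c-1)·K_q and b_q = a·K_q; (iii) if α, β ∈ ℂ are the roots of t² - (1+c)t + (c-ab) = 0, then K_q = Σ_{j=0}^{q-1} α^{q-1-j} β^{j}. -/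
/-- A sequence with `u 1 = 1`, `u 2 = α + β` satisfying the recurrence with characteristic roots
`α`, `β` is the complete homogeneous sum in `α` and `β`. -/
theorem eq_geom_sum₂_of_recurrence {R : Type*} [CommRing R] {u : ℕ → R} {α β : R}
    (h₁ : u 1 = 1) (h₂ : u 2 = α + β)
    (hrec : ∀ q, u (q + 2) = (α + β) * u (q + 1) - α * β * u q) {q : ℕ} (hq : 1 ≤ q) :
    u q = ∑ j ∈ Finset.range q, α ^ (q - 1 - j) * β ^ j := by
  have hstep : ∀ q, 1 ≤ q → u (q + 1) = β ^ q + α * u q := by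
    intro q hq
    induction q, hq using Nat.le_induction with
    | base => rw [h₂, h₁]; ring
    | succ q _ ih => rw [hrec]; linear_combination β * ih
  induction q, hq using Nat.le_induction with
  | base => simp [h₁]
  | succ q hq ih =>
    have hsum := geom_sum₂_succ_eq β α (n := q)
    simp only [mul_comm (β ^ _)] at hsum
    rw [hstep q hq, ih, Nat.add_sub_cancel, hsum]

/-- The iterates of `x ↦ (x + a) / (b * x + c)` along orbits avoiding the pole are given by the
powers of the matrix with rows `(1, a)` and `(b, c)`. -/
theorem iterate_eq_linear_fractional {k : Type*} [Field k] {a b c : k} {f : k → k}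
    (hf : ∀ x, f x = (x + a) / (b * x + c)) {A B C D : ℕ → k}
    (hA1 : A 1 = 1) (hB1 : B 1 = a) (hC1 : C 1 = b) (hD1 : D 1 = c)
    (hArec : ∀ q : ℕ, A (q + 1) = A q + b * B q)
    (hBrec : ∀ q : ℕ, B (q + 1) = a * A q + c * B q)
    (hCrec : ∀ q : ℕ, C (q + 1) = C q + b * D q)
    (hDrec : ∀ q : ℕ, D (q + 1) = a * C q + c * D q) {q : ℕ} (hq : 1 ≤ q) :
    ∀ x, (∀ n : ℕ, b * f^[n] x + c ≠ 0) →
      C q * x + D q ≠ 0 ∧ f^[q] x = (A q * x + B q) / (C q * x + D q) := by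
  induction q, hq using Nat.le_induction with
  | base =>
    intro x hx
    have h₀ : b * x + c ≠ 0 := hx 0
    simpa [hA1, hB1, hC1, hD1, hf] using h₀
  | succ q _ ih =>
    intro x hx
    have h₀ : b * x + c ≠ 0 := hx 0
    obtain ⟨hne, heq⟩ := ih (f x) fun n => hx (n + 1)
    have hden : C (q + 1) * x + D (q + 1) = (C q * f x + D q) * (b * x + c) := by
      rw [hCrec, hDrec, hf]; field_simp; ring
    have hnum : A (q + 1) * x + B (q + 1) = (A q * f x + B q) * (b * x + c) := by
      rw [hArec, hBrec, hf]; field_simp; ring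
    rw [hden, hnum, Function.iterate_succ_apply, heq, mul_div_mul_right _ _ h₀]
    exact ⟨mul_ne_zero hne h₀, rfl⟩

/-- Fix `a b c : ℝ` with `b ≠ 0`, `c ≠ a*b`, `f x = (x+a)/(b*x+c)`,
`𝒫 = {x | ∃ n, f^[n] x = -c/b}`, and `K` defined by `K 1 = 1`, `K 2 = 1+c`,
`K (q+2) = (c+1)*K (q+1) - (c-ab)*K q`. Define sequences `A, B, C, D` (for `a_q, b_q,
c_q, d_q`) by `A 1 = 1, B 1 = a, C 1 = b, D 1 = c` and the recurrences
`A (q+1) = A q + b*B q`, `B (q+1) = a*A q + c*B q`, `C (q+1) = C q + b*D q`,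
`D (q+1) = a*C q + c*D q`. Then for every `q ≥ 1`:
(i) `f^[q] x = (A q * x + B q)/(C q * x + D q)` (with nonzero denominator) for all
`x ∈ ℝ \ 𝒫`; (ii) `C q = b*K q`, `D q - A q = (c-1)*K q`, `B q = a*K q`;
(iii) if `α, β ∈ ℂ` are the roots of `t² - (1+c)t + (c-ab) = 0` (i.e. `α + β = 1+c` and
`α*β = c - ab`), then `K q = ∑_{j=0}^{q-1} α^(q-1-j) * β^j`. -/
theorem stmt3 (a b c : ℝ) (hb : b ≠ 0) (hc : c ≠ a * b)
    (f : ℝ → ℝ) (hf : ∀ x, f x = (x + a) / (b * x + c))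
    (P : Set ℝ) (hP : P = {x : ℝ | ∃ n : ℕ, f^[n] x = -c / b})
    (K : ℕ → ℝ) (hK1 : K 1 = 1) (hK2 : K 2 = 1 + c)
    (hKrec : ∀ q : ℕ, K (q + 2) = (c + 1) * K (q + 1) - (c - a * b) * K q)
    (A B C D : ℕ → ℝ)
    (hA1 : A 1 = 1) (hB1 : B 1 = a) (hC1 : C 1 = b) (hD1 : D 1 = c)
    (hArec : ∀ q : ℕ, A (q + 1) = A q + b * B q)
    (hBrec : ∀ q : ℕ, B (q + 1) = a * A q + c * B q)
    (hCrec : ∀ q : ℕ, C (q + 1) = C q + b * D q)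
    (hDrec : ∀ q : ℕ, D (q + 1) = a * C q + c * D q) :
    ∀ q : ℕ, 1 ≤ q →
      ((∀ x : ℝ, x ∉ P →
          C q * x + D q ≠ 0 ∧ f^[q] x = (A q * x + B q) / (C q * x + D q)) ∧
       (C q = b * K q ∧ D q - A q = (c - 1) * K q ∧ B q = a * K q) ∧
       (∀ α β : ℂ, α + β = 1 + (c : ℂ) → α * β = (c : ℂ) - a * b →
          (K q : ℂ) = ∑ j ∈ Finset.range q, α ^ (q - 1 - j) * β ^ j)) := by
  intro q hq
  refine ⟨fun x hx => ?_, ?_, fun α β hadd hmul => ?_⟩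
  · refine iterate_eq_linear_fractional hf hA1 hB1 hC1 hD1 hArec hBrec hCrec hDrec hq x
      fun n hn => hx ?_
    rw [hP]
    exact ⟨n, by rw [eq_div_iff hb]; linear_combination hn⟩
  · suffices h : K (q + 1) = K q + D q ∧
        C q = b * K q ∧ D q - A q = (c - 1) * K q ∧ B q = a * K q from h.2
    induction q, hq using Nat.le_induction with
    | base => simp [hA1, hB1, hC1, hD1, hK1, hK2]
    | succ q _ ih =>
      obtain ⟨hK, hC, hDA, hB⟩ := ih
      refine ⟨?_, ?_, ?_, ?_⟩
      · rw [hKrec, hDrec]; linear_combination c * hK - a * hC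
      · rw [hCrec]; linear_combination hC - b * hK
      · rw [hDrec, hArec]; linear_combination a * hC - b * hB + hDA - (c - 1) * hK
      · rw [hBrec]; linear_combination c * hB - a * hDA - a * hK
  · refine eq_geom_sum₂_of_recurrence (u := fun n => (K n : ℂ)) ?_ ?_ (fun n => ?_) hq
    · simp [hK1]
    · simp [hK2, hadd]
    · simp only [hKrec, hadd, hmul]
      push_cast
      ring
end

section
/- Let q ≥ 1 and suppose K_q(a,b,c) ≠ 0. Then f has no q-periodic points other than fixed points: if x ∈ ℝ is such that the iterates f(x), f²(x), …, f^q(x) are all defined and f^q(x) = x, then f(x) = x. -/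
/-- Closed form, with denominators cleared, for the iterates of a Möbius map along an orbit that
avoids the pole. -/
theorem iterate_mobius_mul_eq {F : Type*} [Field F] {a b c : F} {f : F → F} {K : ℕ → F}
    (hK0 : K 0 = 0) (hK1 : K 1 = 1)
    (hKrec : ∀ q : ℕ, K (q + 2) = (c + 1) * K (q + 1) - (c - a * b) * K q) (x : F) (n : ℕ)
    (hstep : ∀ i < n + 1, f (f^[i] x) * (b * f^[i] x + c) = f^[i] x + a) :
    f^[n + 1] x * (K (n + 1) * (b * x + c) - (c - a * b) * K n) =
      K (n + 1) * (x + a) - (c - a * b) * K n * x := by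
  induction n with
  | zero => simpa [hK0, hK1] using hstep 0 Nat.one_pos
  | succ n ih =>
    have hprev := ih fun i hi => hstep i (hi.trans (Nat.lt_succ_self _))
    have hlast := hstep (n + 1) (Nat.lt_succ_self _)
    rw [Function.iterate_succ_apply' f (n + 1), hKrec n]
    linear_combination (K (n + 1) * (b * x + c) - (c - a * b) * K n) * hlast +
      (1 - b * f (f^[n + 1] x)) * hprev

/-- Fix `a b c : ℝ` with `b ≠ 0`, `c ≠ a*b`, `f x = (x+a)/(b*x+c)`
(defined for `x ≠ x̂ = -c/b`), and `K` defined by `K 1 = 1`, `K 2 = 1+c`,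
`K (q+2) = (c+1)*K (q+1) - (c-ab)*K q`. Let `q ≥ 1` and suppose `K q ≠ 0`. Then `f`
has no `q`-periodic points other than fixed points: if `x ∈ ℝ` is such that the
iterates `f x, f² x, …, f^q x` are all defined (i.e. no iterate `f^[i] x`, `i < q`,
equals the pole `x̂`) and `f^[q] x = x`, then `f x = x`. -/
theorem stmt4 (a b c : ℝ) (hb : b ≠ 0) (hc : c ≠ a * b)
    (f : ℝ → ℝ) (hf : ∀ x, f x = (x + a) / (b * x + c))
    (K : ℕ → ℝ) (hK1 : K 1 = 1) (hK2 : K 2 = 1 + c)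
    (hKrec : ∀ q : ℕ, K (q + 2) = (c + 1) * K (q + 1) - (c - a * b) * K q)
    (q : ℕ) (hq : 1 ≤ q) (hKq : K q ≠ 0) :
    ∀ x : ℝ, (∀ i : ℕ, i < q → f^[i] x ≠ -c / b) → f^[q] x = x → f x = x := by
  intro x hpole hper
  have hden : ∀ y, y ≠ -c / b → b * y + c ≠ 0 := fun y hy h =>
    hy ((eq_div_iff hb).2 (by linear_combination h))
  have hK0 : K 0 = 0 := by
    have h : (c - a * b) * K 0 = 0 := by
      linear_combination (c + 1) * hK1 - hK2 + hKrec 0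
    exact (mul_eq_zero.1 h).resolve_left (sub_ne_zero.2 hc)
  obtain ⟨n, rfl⟩ := Nat.exists_eq_add_of_le' hq
  have key := iterate_mobius_mul_eq (f := f) hK0 hK1 hKrec x n fun i hi => by
    rw [hf, div_mul_cancel₀ _ (hden _ (hpole i hi))]
  rw [hper] at key
  rw [hf, div_eq_iff (hden x (hpole 0 hq))]
  exact mul_left_cancel₀ hKq (by linear_combination -key)
end

section
/- Let q ≥ 1 and suppose K_q(a,b,c) = 0. Then every point with well-defined orbit is q-periodic: f^q(x) = x for every x ∈ ℝ \ 𝒫. -/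
/-- Closed form for the iterates of `x ↦ (x + a) / (b * x + c)` along an orbit that avoids the
pole: `f^[n + 1] x` is a quotient with nonzero denominator whose coefficients are given by `K`. -/
lemma iterate_mobius_closed_form {a b c x : ℝ} {f : ℝ → ℝ}
    (hf : ∀ y, f y = (y + a) / (b * y + c))
    (hx : ∀ n : ℕ, b * f^[n] x + c ≠ 0) {K : ℕ → ℝ} (hK0 : (c - a * b) * K 0 = 0) (hK1 : K 1 = 1)
    (hKrec : ∀ q : ℕ, K (q + 2) = (c + 1) * K (q + 1) - (c - a * b) * K q) (n : ℕ) :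
    K (n + 1) * (b * x + c) - (c - a * b) * K n ≠ 0 ∧
      f^[n + 1] x * (K (n + 1) * (b * x + c) - (c - a * b) * K n) =
        K (n + 1) * (x + a) - (c - a * b) * K n * x := by
  induction n with
  | zero =>
    have h0 : b * x + c ≠ 0 := hx 0
    simp only [zero_add, hK1, hK0, Function.iterate_one, hf]
    refine ⟨by simpa using h0, ?_⟩
    rw [one_mul, sub_zero, div_mul_cancel₀ _ h0]
    ring
  | succ n ih =>
    obtain ⟨hD, hN⟩ := ih
    have hy := hx (n + 1)
    have hstep : f^[n + 1 + 1] x * (b * f^[n + 1] x + c) = f^[n + 1] x + a := by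
      rw [Function.iterate_succ_apply', hf, div_mul_cancel₀ _ hy]
    have hden : K (n + 1 + 1) * (b * x + c) - (c - a * b) * K (n + 1) =
        (K (n + 1) * (b * x + c) - (c - a * b) * K n) * (b * f^[n + 1] x + c) := by
      rw [hKrec n]
      linear_combination (-b) * hN
    refine ⟨hden ▸ mul_ne_zero hD hy, ?_⟩
    rw [hden, hKrec n]
    linear_combination (K (n + 1) * (b * x + c) - (c - a * b) * K n) * hstep + hN

/-- Fix `a b c : ℝ` with `b ≠ 0`, `c ≠ a*b`, `f x = (x+a)/(b*x+c)`,
`𝒫 = {x | ∃ n, f^[n] x = -c/b}`, and `K` defined by `K 1 = 1`, `K 2 = 1+c`,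
`K (q+2) = (c+1)*K (q+1) - (c-ab)*K q`. Let `q ≥ 1` and suppose `K q = 0`. Then every
point with well-defined orbit is `q`-periodic: `f^[q] x = x` for every `x ∈ ℝ \ 𝒫`. -/
theorem stmt5 (a b c : ℝ) (hb : b ≠ 0) (hc : c ≠ a * b)
    (f : ℝ → ℝ) (hf : ∀ x, f x = (x + a) / (b * x + c))
    (P : Set ℝ) (hP : P = {x : ℝ | ∃ n : ℕ, f^[n] x = -c / b})
    (K : ℕ → ℝ) (hK1 : K 1 = 1) (hK2 : K 2 = 1 + c)
    (hKrec : ∀ q : ℕ, K (q + 2) = (c + 1) * K (q + 1) - (c - a * b) * K q)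
    (q : ℕ) (hq : 1 ≤ q) (hKq : K q = 0) :
    ∀ x : ℝ, x ∉ P → f^[q] x = x := by
  subst hP
  intro x hxP
  have hx : ∀ n : ℕ, b * f^[n] x + c ≠ 0 := fun n h =>
    hxP ⟨n, by rw [eq_div_iff hb]; linear_combination h⟩
  have hK0 : (c - a * b) * K 0 = 0 := by
    linear_combination hKrec 0 - hK2 + (c + 1) * hK1
  obtain ⟨n, rfl⟩ := Nat.exists_eq_add_of_le' hq
  obtain ⟨hD, hN⟩ := iterate_mobius_closed_form hf hx hK0 hK1 hKrec n
  rw [hKq] at hD hN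
  exact mul_right_cancel₀ hD (by linear_combination hN)
end

section
/- Suppose D > 0 and |α| ≠ |β| (equivalently c ≠ -1). Then for every x ∈ ℝ \ ({x₁, x₂} ∪ 𝒫), the orbit converges: lim_{n→∞} f^n(x) = x₂ if |α| < |β|, and lim_{n→∞} f^n(x) = x₁ if |α| > |β|. -/
open Filter Topology in
/-- If the distances of `y n` to `p` and `q` evolve, up to a common nonzero factor, by `s` and `r`
with `|s| < |r|`, then `y` converges to `p` unless it starts at `q`. -/
theorem tendsto_of_sub_mul_eq {y d : ℕ → ℝ} {p q r s : ℝ} (hpq : p ≠ q) (hsr : |s| < |r|)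
    (h0 : y 0 ≠ q) (hd : ∀ n, d n ≠ 0) (hp : ∀ n, (y (n + 1) - p) * d n = s * (y n - p))
    (hq : ∀ n, (y (n + 1) - q) * d n = r * (y n - q)) :
    Tendsto y atTop (𝓝 p) := by
  have hr : r ≠ 0 := abs_pos.mp ((abs_nonneg s).trans_lt hsr)
  have hy : ∀ n, y n - q ≠ 0 := by
    intro n
    induction n with
    | zero => exact sub_ne_zero.mpr h0
    | succ n ih => exact left_ne_zero_of_mul (hq n ▸ mul_ne_zero hr ih)
  have hratio : ∀ n, (y n - p) / (y n - q) = (s / r) ^ n * ((y 0 - p) / (y 0 - q)) := by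
    intro n
    induction n with
    | zero => simp
    | succ n ih =>
      rw [pow_succ', mul_assoc, ← ih, ← mul_div_mul_right _ _ (hd n), hp, hq, mul_div_mul_comm]
  have hlim : Tendsto (fun n => (y n - p) / (y n - q)) atTop (𝓝 0) := by
    have hlt : |s / r| < 1 := by
      rw [abs_div]
      exact (div_lt_one (abs_pos.mpr hr)).mpr hsr
    rw [funext hratio]
    simpa using (tendsto_pow_atTop_nhds_zero_of_abs_lt_one hlt).mul_const
      ((y 0 - p) / (y 0 - q))
  have hform : ∀ n, y n =
      (p - q * ((y n - p) / (y n - q))) / (1 - (y n - p) / (y n - q)) := by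
    intro n
    have hn := hy n
    have hne : 1 - (y n - p) / (y n - q) ≠ 0 := by
      rw [one_sub_div hn]
      exact div_ne_zero (by simpa using sub_ne_zero.mpr hpq) hn
    rw [eq_div_iff hne]
    field_simp
    ring
  have hmain := (tendsto_const_nhds (x := p)).sub (hlim.const_mul q) |>.div
    ((tendsto_const_nhds (x := (1 : ℝ))).sub hlim) (by norm_num)
  simp only [mul_zero, sub_zero, div_one] at hmain
  exact hmain.congr fun n => (hform n).symm

/-- Fix `a b c : ℝ` with `b ≠ 0`, `c ≠ a*b`, `f x = (x+a)/(b*x+c)`,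
`𝒫 = {x | ∃ n, f^[n] x = -c/b}`, `D = (c-1)^2 + 4*a*b`. Suppose `D > 0` and, with
`x₁ = (1-c+√D)/(2b)`, `x₂ = (1-c-√D)/(2b)` (the fixed points of `f`),
`α = (1+c+√D)/2`, `β = (1+c-√D)/2`, suppose `|α| ≠ |β|`. Then for every
`x ∈ ℝ \ ({x₁, x₂} ∪ 𝒫)` the orbit converges: `f^[n] x → x₂` as `n → ∞` if
`|α| < |β|`, and `f^[n] x → x₁` if `|α| > |β|`. -/
theorem stmt6 (a b c : ℝ) (hb : b ≠ 0) (hc : c ≠ a * b)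
    (f : ℝ → ℝ) (hf : ∀ x, f x = (x + a) / (b * x + c))
    (P : Set ℝ) (hP : P = {x : ℝ | ∃ n : ℕ, f^[n] x = -c / b})
    (D : ℝ) (hD : D = (c - 1) ^ 2 + 4 * a * b) (hD0 : 0 < D)
    (x₁ x₂ α β : ℝ)
    (hx₁ : x₁ = (1 - c + Real.sqrt D) / (2 * b))
    (hx₂ : x₂ = (1 - c - Real.sqrt D) / (2 * b))
    (hα : α = (1 + c + Real.sqrt D) / 2)
    (hβ : β = (1 + c - Real.sqrt D) / 2)
    (hαβ : |α| ≠ |β|) :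
    ∀ x : ℝ, x ∉ ({x₁, x₂} : Set ℝ) ∪ P →
      (|α| < |β| → Filter.Tendsto (fun n : ℕ => f^[n] x) Filter.atTop (nhds x₂)) ∧
      (|α| > |β| → Filter.Tendsto (fun n : ℕ => f^[n] x) Filter.atTop (nhds x₁)) := by
  intro x hx
  simp only [hP, Set.mem_union, Set.mem_insert_iff, Set.mem_singleton_iff, Set.mem_ofPred_eq,
    not_or, not_exists] at hx
  obtain ⟨⟨hxx₁, hxx₂⟩, hxP⟩ := hx
  have hsq : Real.sqrt D ^ 2 = (c - 1) ^ 2 + 4 * a * b := by rw [Real.sq_sqrt hD0.le, hD]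
  have hpos : 0 < Real.sqrt D := Real.sqrt_pos.mpr hD0
  have hbx₁ : 2 * (b * x₁) = 1 - c + Real.sqrt D := by rw [hx₁]; field_simp
  have hbx₂ : 2 * (b * x₂) = 1 - c - Real.sqrt D := by rw [hx₂]; field_simp
  have hfix₁ : x₁ + a = x₁ * (b * x₁ + c) :=
    mul_left_cancel₀ hb (by
      linear_combination
        (1 / 2 - c / 2 - (2 * (b * x₁) + 1 - c + Real.sqrt D) / 4) * hbx₁ - hsq / 4)
  have hfix₂ : x₂ + a = x₂ * (b * x₂ + c) :=
    mul_left_cancel₀ hb (by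
      linear_combination
        (1 / 2 - c / 2 - (2 * (b * x₂) + 1 - c - Real.sqrt D) / 4) * hbx₂ - hsq / 4)
  have hne : x₁ ≠ x₂ := by
    rintro rfl
    linarith
  have hd : ∀ n, b * f^[n] x + c ≠ 0 := by
    intro n h
    apply hxP n
    rw [eq_div_iff hb]
    linarith
  have hstep : ∀ n, f^[n + 1] x * (b * f^[n] x + c) = f^[n] x + a := by
    intro n
    rw [Function.iterate_succ_apply', hf, div_mul_cancel₀ _ (hd n)]
  have h₁ : ∀ n, (f^[n + 1] x - x₁) * (b * f^[n] x + c) = β * (f^[n] x - x₁) := by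
    intro n
    rw [hβ]
    linear_combination hstep n + hfix₁ - (f^[n] x - x₁) / 2 * hbx₁
  have h₂ : ∀ n, (f^[n + 1] x - x₂) * (b * f^[n] x + c) = α * (f^[n] x - x₂) := by
    intro n
    rw [hα]
    linear_combination hstep n + hfix₂ - (f^[n] x - x₂) / 2 * hbx₂
  exact ⟨fun h => tendsto_of_sub_mul_eq hne.symm h hxx₁ hd h₂ h₁,
    fun h => tendsto_of_sub_mul_eq hne h hxx₂ hd h₁ h₂⟩
end

section
/- Suppose D = 0. Then for every x ∈ ℝ \ 𝒫, the orbit converges to the unique fixed point: lim_{n→∞} f^n(x) = (1-c)/(2b). -/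
/-- If `u (n + 1) = s * u n / (b * u n + s)` with nonvanishing denominators, then
`u n = s * u 0 / (s + n * b * u 0)`, stated without division. -/
theorem parabolic_orbit_formula {b s : ℝ} {u : ℕ → ℝ}
    (hne : ∀ n, b * u n + s ≠ 0) (hu : ∀ n, u (n + 1) * (b * u n + s) = s * u n) (n : ℕ) :
    u n * (s + b * u 0 * n) = s * u 0 := by
  induction n with
  | zero => push_cast; ring
  | succ n ih =>
    apply mul_right_cancel₀ (hne n)
    push_cast
    linear_combination (s + b * u 0 * (n + 1)) * hu n + s * ih

/-- Orbits of a parabolic Möbius map, centred at its fixed point, converge to `0`. -/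
theorem tendsto_parabolic_orbit {b s : ℝ} {u : ℕ → ℝ} (hb : b ≠ 0) (hs : s ≠ 0)
    (hne : ∀ n, b * u n + s ≠ 0) (hu : ∀ n, u (n + 1) * (b * u n + s) = s * u n) :
    Filter.Tendsto u Filter.atTop (nhds 0) := by
  have key := parabolic_orbit_formula hne hu
  by_cases h0 : u 0 = 0
  · have hz : u = fun _ => 0 := by
      funext n
      simpa [h0, hs] using key n
    rw [hz]
    exact tendsto_const_nhds
  · have hlim := tendsto_add_mul_div_add_mul_atTop_nhds (s * u 0) s 0 (mul_ne_zero hb h0)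
    rw [zero_div] at hlim
    refine hlim.congr fun n => ?_
    have hden : s + b * u 0 * n ≠ 0 := right_ne_zero_of_mul (key n ▸ mul_ne_zero hs h0)
    rw [zero_mul, add_zero, div_eq_iff hden, key n]

/-- Fix `a b c : ℝ` with `b ≠ 0`, `c ≠ a*b`, `f x = (x+a)/(b*x+c)`,
`𝒫 = {x | ∃ n, f^[n] x = -c/b}`. Suppose `D = (c-1)^2 + 4*a*b = 0`. Then for every
`x ∈ ℝ \ 𝒫` the orbit converges to the unique fixed point: `f^[n] x → (1-c)/(2b)`. -/
theorem stmt7 (a b c : ℝ) (hb : b ≠ 0) (hc : c ≠ a * b)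
    (f : ℝ → ℝ) (hf : ∀ x, f x = (x + a) / (b * x + c))
    (P : Set ℝ) (hP : P = {x : ℝ | ∃ n : ℕ, f^[n] x = -c / b})
    (hD : (c - 1) ^ 2 + 4 * a * b = 0) :
    ∀ x : ℝ, x ∉ P →
      Filter.Tendsto (fun n : ℕ => f^[n] x) Filter.atTop (nhds ((1 - c) / (2 * b))) := by
  intro x hx
  subst hP
  have hden : ∀ n : ℕ, b * f^[n] x + c ≠ 0 := fun n h =>
    hx ⟨n, by rw [eq_div_iff hb]; linear_combination h⟩
  have hs : (1 + c) / 2 ≠ 0 := by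
    intro h
    apply hc
    linear_combination (1 + c) / 2 * h - hD / 4
  have hshift : ∀ y, b * (y - (1 - c) / (2 * b)) + (1 + c) / 2 = b * y + c := by
    intro y
    field_simp
    ring
  rw [← tendsto_sub_nhds_zero_iff]
  refine tendsto_parabolic_orbit hb hs (fun n => ?_) (fun n => ?_)
  · rw [hshift]
    exact hden n
  · have hn := hden n
    rw [hshift, Function.iterate_succ_apply', hf, sub_mul, div_mul_cancel₀ _ hn]
    field_simp
    linear_combination hD
end

section
/- Suppose D < 0 and K_q(a,b,c) ≠ 0 for every q ≥ 2. Then for every x ∈ ℝ \ 𝒫, the trajectory {f^n(x) : n ≥ 1} is dense in ℝ. -/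
open Complex ComplexConjugate

/-- The powers of an element of infinite order are dense in the circle. -/
theorem Circle.denseRange_pow_of_not_isOfFinOrder {u : Circle} (hu : ¬ IsOfFinOrder u) :
    DenseRange (fun n : ℕ => u ^ n) := by
  have hT : (2 * Real.pi) ≠ 0 := Real.two_pi_pos.ne'
  have : Fact (0 < 2 * Real.pi) := ⟨Real.two_pi_pos⟩
  obtain ⟨t, rfl⟩ := (AddCircle.homeomorphCircle hT).surjective u
  have hpow (n : ℕ) : AddCircle.homeomorphCircle hT t ^ n =
      AddCircle.homeomorphCircle hT (n • t) := by
    simp [AddCircle.homeomorphCircle_apply, AddCircle.toCircle_nsmul]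
  have ht : addOrderOf t = 0 := by
    rw [addOrderOf_eq_zero_iff, isOfFinAddOrder_iff_nsmul_eq_zero]
    rintro ⟨n, hn, h⟩
    refine hu (isOfFinOrder_iff_pow_eq_one.2 ⟨n, hn, ?_⟩)
    rw [hpow, h]
    simp [AddCircle.homeomorphCircle_apply]
  have hd : DenseRange (fun n : ℕ => n • t) :=
    denseRange_zsmul_iff_nsmul.1 (AddCircle.denseRange_zsmul_iff.2 ht)
  have := (AddCircle.homeomorphCircle hT).surjective.denseRange.comp hd
    (AddCircle.homeomorphCircle hT).continuous
  simpa only [Function.comp_def, hpow] using this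

/-- Closed form of a second-order linear recurrence with characteristic roots `l`, `m`. -/
theorem linear_recurrence_mul_sub_eq {R : Type*} [CommRing R] {K : ℕ → R} {l m : R}
    (h0 : K 0 = 0) (h1 : K 1 = 1)
    (hrec : ∀ q, K (q + 2) = (l + m) * K (q + 1) - l * m * K q) (q : ℕ) :
    K q * (l - m) = l ^ q - m ^ q := by
  induction q using Nat.twoStepInduction with
  | zero => simp [h0]
  | one => simp [h1]
  | more q ih ih' =>
    rw [hrec]
    linear_combination (l + m) * ih' - l * m * ih

theorem ofReal_sub_conj_ne_zero {w : ℂ} (hw : w.im ≠ 0) (x : ℝ) : (x : ℂ) - conj w ≠ 0 :=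
  fun h => hw (by simpa using congrArg Complex.im h)

/-- The Cayley-type map `x ↦ (x - w) / (x - conj w)` from the real line to the circle. -/
noncomputable def cayleyCircle (w : ℂ) (hw : w.im ≠ 0) (x : ℝ) : Circle :=
  Circle.ofConjDivSelf (x - conj w) (ofReal_sub_conj_ne_zero hw x)

theorem coe_cayleyCircle (w : ℂ) (hw : w.im ≠ 0) (x : ℝ) :
    (cayleyCircle w hw x : ℂ) = (x - w) / (x - conj w) := by
  simp [cayleyCircle, Circle.ofConjDivSelf]

theorem sub_conj_ne_zero_of_im_ne_zero {w : ℂ} (hw : w.im ≠ 0) : w - conj w ≠ 0 := fun h =>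
  hw (by
    have := congrArg Complex.im h
    simp at this
    linarith)

theorem one_sub_coe_cayleyCircle {w : ℂ} (hw : w.im ≠ 0) (x : ℝ) :
    1 - (cayleyCircle w hw x : ℂ) = (w - conj w) / (x - conj w) := by
  have := ofReal_sub_conj_ne_zero hw x
  rw [coe_cayleyCircle]
  field_simp
  ring

/-- The inverse of `cayleyCircle`. -/
noncomputable def cayleyCircleInv (w : ℂ) (z : Circle) : ℝ :=
  ((w - conj w * z) / (1 - z)).re

theorem cayleyCircleInv_cayleyCircle {w : ℂ} (hw : w.im ≠ 0) (x : ℝ) :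
    cayleyCircleInv w (cayleyCircle w hw x) = x := by
  have hx := ofReal_sub_conj_ne_zero hw x
  have hw' := sub_conj_ne_zero_of_im_ne_zero hw
  have : (w - conj w * cayleyCircle w hw x) / (1 - (cayleyCircle w hw x : ℂ)) = x := by
    rw [one_sub_coe_cayleyCircle, coe_cayleyCircle]
    field_simp
    ring
  rw [cayleyCircleInv, this, ofReal_re]

theorem continuousAt_cayleyCircleInv {w : ℂ} (hw : w.im ≠ 0) (x : ℝ) :
    ContinuousAt (cayleyCircleInv w) (cayleyCircle w hw x) := by
  have h : 1 - (cayleyCircle w hw x : ℂ) ≠ 0 := by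
    rw [one_sub_coe_cayleyCircle]
    exact div_ne_zero (sub_conj_ne_zero_of_im_ne_zero hw) (ofReal_sub_conj_ne_zero hw x)
  have hc : Continuous fun z : Circle => (z : ℂ) := continuous_subtype_val
  refine Complex.continuous_re.continuousAt.comp (ContinuousAt.div ?_ ?_ h)
  · exact (continuous_const.sub (continuous_const.mul hc)).continuousAt
  · exact (continuous_const.sub hc).continuousAt

/-- A real sequence that `cayleyCircle` turns into an irrational rotation orbit is dense. -/
theorem denseRange_of_cayleyCircle_eq_pow_mul {w : ℂ} (hw : w.im ≠ 0) {u v : Circle}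
    (hu : ¬ IsOfFinOrder u) {s : ℕ → ℝ} (hs : ∀ n, cayleyCircle w hw (s n) = u ^ n * v) :
    DenseRange s := by
  intro y
  have hd : DenseRange (fun n : ℕ => u ^ n * v) :=
    (mul_right_surjective v).denseRange.comp
      (Circle.denseRange_pow_of_not_isOfFinOrder hu) (continuous_mul_const v)
  have hy := mem_closure_image (continuousAt_cayleyCircleInv hw y) (hd (cayleyCircle w hw y))
  rw [cayleyCircleInv_cayleyCircle, ← Set.range_comp] at hy
  convert hy using 3
  funext n
  rw [Function.comp_apply, ← hs, cayleyCircleInv_cayleyCircle]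

theorem coe_ofConjDivSelf_mul_add {b c : ℝ} {w : ℂ} (h : (b * w + c : ℂ) ≠ 0) :
    (Circle.ofConjDivSelf (b * w + c) h : ℂ) = (b * conj w + c) / (b * w + c) := by
  simp [Circle.ofConjDivSelf]

/-- A real Möbius map with a non-real fixed point `w` acts as a rotation on the circle. -/
theorem cayleyCircle_mobius {a b c : ℝ} {w : ℂ} (hw : w.im ≠ 0)
    (hfix : b * w ^ 2 + (c - 1) * w - a = 0) (hl : (b * w + c : ℂ) ≠ 0) {x : ℝ}
    (hx : b * x + c ≠ 0) :
    cayleyCircle w hw ((x + a) / (b * x + c)) =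
      Circle.ofConjDivSelf (b * w + c) hl * cayleyCircle w hw x := by
  have hfix' : b * conj w ^ 2 + (c - 1) * conj w - a = 0 := by
    simpa using congrArg conj hfix
  have hsum : b * conj w + c = 1 - b * w :=
    mul_left_cancel₀ (sub_conj_ne_zero_of_im_ne_zero hw) (by linear_combination hfix - hfix')
  have hx' : (b * x + c : ℂ) ≠ 0 := mod_cast hx
  have hnum : ((x + a) / (b * x + c) - w : ℂ) = (b * conj w + c) * (x - w) / (b * x + c) := by
    rw [hsum, eq_div_iff hx', sub_mul, div_mul_cancel₀ _ hx']
    linear_combination -hfix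
  have hden : ((x + a) / (b * x + c) - conj w : ℂ) =
      (b * w + c) * (x - conj w) / (b * x + c) := by
    rw [eq_div_iff hx', sub_mul, div_mul_cancel₀ _ hx']
    linear_combination -hfix' - (x - conj w) * hsum
  have hxw := ofReal_sub_conj_ne_zero hw x
  apply Circle.ext
  rw [Circle.coe_mul, coe_ofConjDivSelf_mul_add, coe_cayleyCircle, coe_cayleyCircle]
  push_cast
  rw [hnum, hden]
  field_simp



/-- Fix `a b c : ℝ` with `b ≠ 0`, `c ≠ a*b`, `f x = (x+a)/(b*x+c)`,
`𝒫 = {x | ∃ n, f^[n] x = -c/b}`, `D = (c-1)^2 + 4*a*b`, and `K` defined by `K 1 = 1`,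
`K 2 = 1+c`, `K (q+2) = (c+1)*K (q+1) - (c-ab)*K q`. Suppose `D < 0` and `K q ≠ 0`
for every `q ≥ 2`. Then for every `x ∈ ℝ \ 𝒫` the trajectory `{f^[n] x : n ≥ 1}`
is dense in `ℝ`. -/
theorem stmt8 (a b c : ℝ) (hb : b ≠ 0) (hc : c ≠ a * b)
    (f : ℝ → ℝ) (hf : ∀ x, f x = (x + a) / (b * x + c))
    (P : Set ℝ) (hP : P = {x : ℝ | ∃ n : ℕ, f^[n] x = -c / b})
    (hD : (c - 1) ^ 2 + 4 * a * b < 0)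
    (K : ℕ → ℝ) (hK1 : K 1 = 1) (hK2 : K 2 = 1 + c)
    (hKrec : ∀ q : ℕ, K (q + 2) = (c + 1) * K (q + 1) - (c - a * b) * K q)
    (hKq : ∀ q : ℕ, 2 ≤ q → K q ≠ 0) :
    ∀ x : ℝ, x ∉ P → Dense {y : ℝ | ∃ n : ℕ, 1 ≤ n ∧ f^[n] x = y} := by
  intro x hx
  have horb (n : ℕ) : b * f^[n] x + c ≠ 0 := fun h => hx <| by
    rw [hP]
    refine ⟨n, ?_⟩
    field_simp
    linear_combination h
  have hbC : (b : ℂ) ≠ 0 := mod_cast hb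
  set s : ℝ := √(-((c - 1) ^ 2 + 4 * a * b))
  have hs0 : s ≠ 0 := (Real.sqrt_pos.2 (by linarith)).ne'
  have hsq : (s : ℂ) ^ 2 = -((c - 1) ^ 2 + 4 * a * b) := by
    exact_mod_cast Real.sq_sqrt (by linarith : 0 ≤ -((c - 1) ^ 2 + 4 * a * b))
  set w : ℂ := ((1 - c) / (2 * b) : ℝ) + (s / (2 * b) : ℝ) * I with hwdef
  have hwim : w.im ≠ 0 := by
    have : w.im = s / (2 * b) := by simp [hwdef, -ofReal_div, -ofReal_mul]
    rw [this]
    positivity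
  have hbw : b * w = ((1 - c) + s * I) / 2 := by
    rw [hwdef]
    push_cast
    field_simp
  have hbw' : b * conj w = ((1 - c) - s * I) / 2 := by
    simpa [sub_eq_add_neg, map_ofNat] using congrArg conj hbw
  have hfix : b * w ^ 2 + (c - 1) * w - a = 0 := by
    refine mul_left_cancel₀ hbC ?_
    linear_combination (b * w + ((1 - c) + s * I) / 2 + c - 1) * hbw - hsq / 4 +
      s ^ 2 / 4 * I_sq
  have hsub : (b * w + c) - (b * conj w + c) ≠ 0 := by
    rw [add_sub_add_right_eq_sub, ← mul_sub]
    exact mul_ne_zero hbC (sub_conj_ne_zero_of_im_ne_zero hwim)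
  have hl : (b * w + c : ℂ) ≠ 0 := fun h => hsub (by
    have := congrArg conj h
    simp only [map_add, map_mul, conj_ofReal, map_zero] at this
    rw [h, this, sub_zero])
  have hK0 : K 0 = 0 := by
    have := hKrec 0
    rw [zero_add, zero_add, hK1, hK2] at this
    exact (mul_eq_zero.1 (by linear_combination this : (c - a * b) * K 0 = 0)).resolve_left
      (sub_ne_zero.2 hc)
  have hK := linear_recurrence_mul_sub_eq (K := fun q => (K q : ℂ)) (l := b * w + c)
    (m := b * conj w + c) (by simp [hK0]) (by simp [hK1]) fun q => by
      simp only [hKrec q]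
      push_cast
      rw [hbw, hbw']
      linear_combination (K q : ℂ) * (hsq / 4 - s ^ 2 / 4 * I_sq)
  have hu : ¬ IsOfFinOrder (Circle.ofConjDivSelf (b * w + c) hl) := by
    rw [isOfFinOrder_iff_pow_eq_one]
    rintro ⟨n, hn, h⟩
    have h' : ((b * conj w + c) / (b * w + c)) ^ n = (1 : ℂ) := by
      rw [← coe_ofConjDivSelf_mul_add hl, ← Circle.coe_pow, h, Circle.coe_one]
    rw [div_pow, div_eq_one_iff_eq (pow_ne_zero n hl)] at h'
    have hKn : K n = 0 := by
      have := hK n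
      rw [h', sub_self] at this
      exact_mod_cast (mul_eq_zero.1 this).resolve_right hsub
    rcases Nat.lt_or_ge n 2 with h2 | h2
    · obtain rfl : n = 1 := by omega
      simp [hK1] at hKn
    · exact hKq n h2 hKn
  have hrot (n : ℕ) : cayleyCircle w hwim (f^[n + 1] x) =
      Circle.ofConjDivSelf (b * w + c) hl ^ n * cayleyCircle w hwim (f x) := by
    induction n with
    | zero => simp
    | succ n ih =>
      rw [Function.iterate_succ_apply', hf, cayleyCircle_mobius hwim hfix hl (horb _), ih,
        pow_succ', mul_assoc]
  refine (denseRange_of_cayleyCircle_eq_pow_mul hwim hu hrot).mono ?_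
  rintro _ ⟨n, rfl⟩
  exact ⟨n + 1, by omega, rfl⟩
end

section
/- Let θ ∈ ℝ and consider the sequence t_n = tan(nθ). (1) If θ = (s/q)π for some integers s and q ≥ 1, then the sequence is periodic: tan((n+q)θ) = tan(nθ) for every n for which both sides are defined. (2) If θ/π is irrational, then nθ is never an odd multiple of π/2 (so t_n is defined for all n ≥ 1) and the set {tan(nθ) : n ≥ 1} is dense in ℝ. -/
open Filter Topology

/-- A real multiple `nθ`, `n ≥ 1`, of an angle incommensurable with `π` is never an odd
multiple of `π / 2`. -/
theorem natCast_mul_ne_odd_mul_pi_div_two {θ : ℝ} (hθ : Irrational (θ / Real.pi)) {n : ℕ}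
    (hn : 1 ≤ n) (k : ℤ) : (n : ℝ) * θ ≠ (2 * (k : ℝ) + 1) * (Real.pi / 2) := by
  intro h
  have hn' : (n : ℝ) ≠ 0 := by positivity
  refine hθ ⟨(2 * k + 1) / (2 * n), ?_⟩
  push_cast
  have := Real.pi_ne_zero
  field_simp
  linarith

/-- If `θ / p` is irrational, the forward orbit of `θ` in `ℝ / pℤ` accumulates at every point. -/
theorem mapClusterPt_nsmul_coe_addCircle {θ p : ℝ} (hp : 0 < p) (hθ : Irrational (θ / p))
    (y : AddCircle p) : MapClusterPt y atTop (fun n : ℕ ↦ n • (θ : AddCircle p)) := by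
  have : Fact (0 < p) := ⟨hp⟩
  rw [mapClusterPt_atTop_nsmul_iff_mem_topologicalClosure_zmultiples]
  exact AddCircle.denseRange_zsmul_coe_iff.2 hθ y

/-- If `θ / π` is irrational, every real is a cluster point of the sequence `tan (nθ)`. -/
theorem mapClusterPt_tan_natCast_mul {θ : ℝ} (hθ : Irrational (θ / Real.pi)) (y : ℝ) :
    MapClusterPt y atTop (fun n : ℕ ↦ Real.tan (n * θ)) := by
  let f : AddCircle Real.pi → ℝ := Real.tan_periodic.lift
  have hf : Tendsto f (𝓝 ((Real.arctan y : ℝ) : AddCircle Real.pi)) (𝓝 y) := by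
    rw [QuotientAddGroup.nhds_eq, tendsto_map'_iff]
    have := (Real.continuousAt_tan.2 (Real.cos_arctan_pos y).ne').tendsto
    rwa [Real.tan_arctan] at this
  have h := (mapClusterPt_nsmul_coe_addCircle Real.pi_pos hθ _).tendsto_comp hf
  convert h using 2 with n
  simp only [Function.comp_apply, ← AddCircle.coe_nsmul, nsmul_eq_mul]
  rfl

/-- Let `θ ∈ ℝ` and consider the sequence `t n = tan (n*θ)`.
(1) If `θ = (s/q)*π` for some integers `s` and `q ≥ 1`, then the sequence is periodic:
`tan ((n+q)*θ) = tan (n*θ)` for every `n` for which both sides are defined (i.e. neither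
`n*θ` nor `(n+q)*θ` is an odd multiple of `π/2`).
(2) If `θ/π` is irrational, then `n*θ` is never an odd multiple of `π/2` for `n ≥ 1`
(so `tan (n*θ)` is defined for all `n ≥ 1`) and the set `{tan (n*θ) : n ≥ 1}` is dense
in `ℝ`. -/
theorem stmt9 (θ : ℝ) :
    ((∀ s : ℤ, ∀ q : ℕ, 1 ≤ q → θ = ((s : ℝ) / (q : ℝ)) * Real.pi →
      ∀ n : ℕ,
        (∀ k : ℤ, (n : ℝ) * θ ≠ (2 * (k : ℝ) + 1) * (Real.pi / 2)) →
        (∀ k : ℤ, ((n : ℝ) + (q : ℝ)) * θ ≠ (2 * (k : ℝ) + 1) * (Real.pi / 2)) →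
        Real.tan (((n : ℝ) + (q : ℝ)) * θ) = Real.tan ((n : ℝ) * θ)) ∧
     (Irrational (θ / Real.pi) →
        (∀ n : ℕ, 1 ≤ n → ∀ k : ℤ, (n : ℝ) * θ ≠ (2 * (k : ℝ) + 1) * (Real.pi / 2)) ∧
        Dense {y : ℝ | ∃ n : ℕ, 1 ≤ n ∧ Real.tan ((n : ℝ) * θ) = y})) := by
  refine ⟨fun s q hq hθ n _ _ ↦ ?_, fun hθ ↦
    ⟨fun n hn k ↦ natCast_mul_ne_odd_mul_pi_div_two hθ hn k, fun y ↦ ?_⟩⟩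
  · have hq' : (q : ℝ) ≠ 0 := by positivity
    have h : ((n : ℝ) + q) * θ = n * θ + s * Real.pi := by
      rw [hθ]
      field_simp
    rw [h, Real.tan_add_int_mul_pi]
  · rw [mem_closure_iff_frequently]
    rw [frequently_iff]
    intro U hU
    obtain ⟨n, hnU, hn⟩ := (((mapClusterPt_tan_natCast_mul hθ y).frequently hU).and_eventually
      (eventually_ge_atTop 1)).exists
    exact ⟨_, hnU, n, hn, rfl⟩
end

section
/- Suppose (c-1)² + 4ab = 0, set x₀ = (1-c)/(2b) and α = |(c+1)/(2b)|_p. Then every sphere of radius ρ < α centered at x₀ is invariant: for every ρ with 0 < ρ < α and every x with |x - x₀|_p = ρ, the whole forward orbit of x is well defined (never hits x̂) and |f^n(x) - x₀|_p = ρ for all n ≥ 1. In particular the open ball U_α(x₀) is a Siegel disk of f centered at x₀. -/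
/-- In the coordinate `x - x₀` centred at its double fixed point `x₀ = (1 - c) / (2 * b)`, the
parabolic Möbius map `x ↦ (x + a) / (b * x + c)` reads `y ↦ y * e / (y + e)` with
`e = (c + 1) / (2 * b)`. -/
theorem mobius_sub_double_fixed_point {K : Type*} [Field K] {a b c x : K} (h2 : (2 : K) ≠ 0)
    (hb : b ≠ 0) (hD : (c - 1) ^ 2 + 4 * a * b = 0) (hx : b * x + c ≠ 0) :
    (x + a) / (b * x + c) - (1 - c) / (2 * b) =
      (x - (1 - c) / (2 * b)) * ((c + 1) / (2 * b)) /
        (x - (1 - c) / (2 * b) + (c + 1) / (2 * b)) := by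
  have hden : x - (1 - c) / (2 * b) + (c + 1) / (2 * b) = (b * x + c) / b := by
    field_simp
    ring
  rw [hden, div_div_eq_mul_div, sub_eq_iff_eq_add, div_eq_iff hx, add_mul, div_mul_cancel₀ _ hx]
  field_simp
  linear_combination hD

/-- In an ultrametric field, `y ↦ y * e / (y + e)` preserves the norm on the open ball of radius
`‖e‖` around `0`. -/
theorem norm_mul_div_add_of_norm_lt {K : Type*} [NormedField K] [IsUltrametricDist K] {y e : K}
    (h : ‖y‖ < ‖e‖) : ‖y * e / (y + e)‖ = ‖y‖ := by
  have he : ‖e‖ ≠ 0 := ((norm_nonneg y).trans_lt h).ne'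
  rw [norm_div, norm_mul, IsUltrametricDist.norm_add_eq_max_of_norm_ne_norm h.ne,
    max_eq_right h.le, mul_div_cancel_right₀ _ he]

/-- `ℂ_p` is modelled as a complete, algebraically closed,
nontrivially normed ultrametric field `K` which is a normed `ℚ_[p]`-algebra; its norm
`‖·‖` plays the role of `|·|_p`. Fix `a b c ∈ K` with `b ≠ 0`, `c ≠ a*b`, and let
`f x = (x+a)/(b*x+c)`, defined for `x ≠ x̂ = -c/b`. Suppose `(c-1)² + 4ab = 0`, set
`x₀ = (1-c)/(2b)` and `α = ‖(c+1)/(2b)‖`. Then every sphere of radius `ρ < α` centered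
at `x₀` is invariant: for every `ρ` with `0 < ρ < α` and every `x` with `‖x - x₀‖ = ρ`,
the whole forward orbit of `x` is well defined (never hits `x̂`) and
`‖f^[n] x - x₀‖ = ρ` for all `n ≥ 1`. In particular the open ball `U_α(x₀)` is a
Siegel disk of `f` centered at `x₀`. -/
theorem stmt11 (p : ℕ) [Fact p.Prime] (K : Type*) [NontriviallyNormedField K]
    [IsUltrametricDist K] [IsAlgClosed K] [CompleteSpace K] [NormedAlgebra ℚ_[p] K]
    (a b c : K) (hb : b ≠ 0) (hc : c ≠ a * b)
    (f : K → K) (hf : ∀ x, f x = (x + a) / (b * x + c))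
    (hD : (c - 1) ^ 2 + 4 * a * b = 0)
    (x₀ : K) (hx₀ : x₀ = (1 - c) / (2 * b))
    (α : ℝ) (hα : α = ‖(c + 1) / (2 * b)‖) :
    ∀ ρ : ℝ, 0 < ρ → ρ < α → ∀ x : K, ‖x - x₀‖ = ρ →
      (∀ n : ℕ, f^[n] x ≠ -c / b) ∧
      (∀ n : ℕ, 1 ≤ n → ‖f^[n] x - x₀‖ = ρ) := by
  intro ρ hρ hρα x hx
  have he : (c + 1) / (2 * b) ≠ 0 := norm_pos_iff.mp (hα ▸ hρ.trans hρα)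
  have h2 : (2 : K) ≠ 0 := fun h => he (by simp [h])
  have avoids : ∀ y : K, ‖y - x₀‖ = ρ → y ≠ -c / b := by
    rintro y hy rfl
    have hpole : -c / b - x₀ = -((c + 1) / (2 * b)) := by
      rw [hx₀]
      field_simp
      ring
    rw [hpole, norm_neg, ← hα] at hy
    exact hρα.ne' hy
  have invariant : ∀ y : K, ‖y - x₀‖ = ρ → ‖f y - x₀‖ = ρ := by
    intro y hy
    have hden : b * y + c ≠ 0 := fun h =>
      avoids y hy ((eq_div_iff hb).mpr (by linear_combination h))
    rw [hf, hx₀, mobius_sub_double_fixed_point h2 hb hD hden, ← hx₀,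
      norm_mul_div_add_of_norm_lt (by rwa [hy, ← hα]), hy]
  have orbit : ∀ n : ℕ, ‖f^[n] x - x₀‖ = ρ := by
    intro n
    induction n with
    | zero => exact hx
    | succ n ih =>
      rw [Function.iterate_succ_apply']
      exact invariant _ ih
  exact ⟨fun n => avoids _ (orbit n), fun n _ => orbit n⟩
end

section
/- Suppose (c-1)² + 4ab = 0, set x₀ = (1-c)/(2b) and α = |(c+1)/(2b)|_p. Then: (i) if |x - x₀|_p > α, then f(x) is defined and |f(x) - x₀|_p = α; (ii) if |x - x₀|_p = α, x ≠ x̂, and |f(x) - x₀|_p > α, then f²(x) is defined and |f²(x) - x₀|_p = α. Hence every point outside U_α(x₀) enters the sphere S_α(x₀) after at most two iterations of f. -/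
/-- In an ultrametric normed field, `y ↦ d * y / (y + d)` sends every point outside the closed ball
of radius `‖d‖` around `0` to the sphere of radius `‖d‖`. -/
theorem norm_mul_div_add_eq_of_norm_lt {K : Type*} [NormedField K] [IsUltrametricDist K]
    {d y : K} (h : ‖d‖ < ‖y‖) : ‖d * y / (y + d)‖ = ‖d‖ := by
  have hy : ‖y‖ ≠ 0 := ((norm_nonneg d).trans_lt h).ne'
  rw [norm_div, norm_mul, IsUltrametricDist.norm_add_eq_max_of_norm_ne_norm h.ne',
    max_eq_left h.le, mul_div_cancel_right₀ _ hy]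

/-- A linear fractional map with vanishing discriminant, in the coordinate centred at its
fixed point. -/
theorem linearFractional_sub_fixedPoint {K : Type*} [Field K] {a b c : K} (h2 : (2 : K) ≠ 0)
    (hb : b ≠ 0) (hD : (c - 1) ^ 2 + 4 * a * b = 0) {x : K} (hx : b * x + c ≠ 0) :
    (x + a) / (b * x + c) - (1 - c) / (2 * b) =
      (c + 1) / (2 * b) * (x - (1 - c) / (2 * b)) /
        (x - (1 - c) / (2 * b) + (c + 1) / (2 * b)) := by
  have hden : x - (1 - c) / (2 * b) + (c + 1) / (2 * b) = (b * x + c) / b := by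
    field_simp
    ring
  rw [hden, div_div_eq_mul_div, sub_eq_iff_eq_add, div_eq_iff hx, add_mul, div_mul_cancel₀ _ hx]
  field_simp
  linear_combination hD

/-- `ℂ_p` is modelled as a complete, algebraically closed,
nontrivially normed ultrametric field `K` which is a normed `ℚ_[p]`-algebra; its norm
`‖·‖` plays the role of `|·|_p`. Fix `a b c ∈ K` with `b ≠ 0`, `c ≠ a*b`, and let
`f x = (x+a)/(b*x+c)`, defined for `x ≠ x̂ = -c/b`. Suppose `(c-1)² + 4ab = 0`, set
`x₀ = (1-c)/(2b)` and `α = ‖(c+1)/(2b)‖`. Then: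
(i) if `‖x - x₀‖ > α`, then `f x` is defined (`x ≠ x̂`) and `‖f x - x₀‖ = α`;
(ii) if `‖x - x₀‖ = α`, `x ≠ x̂`, and `‖f x - x₀‖ > α`, then `f² x` is defined
(`f x ≠ x̂`) and `‖f (f x) - x₀‖ = α`.
Hence every point outside `U_α(x₀)` enters the sphere `S_α(x₀)` after at most two
iterations of `f`. -/
theorem stmt12 (p : ℕ) [Fact p.Prime] (K : Type*) [NontriviallyNormedField K]
    [IsUltrametricDist K] [IsAlgClosed K] [CompleteSpace K] [NormedAlgebra ℚ_[p] K]
    (a b c : K) (hb : b ≠ 0) (hc : c ≠ a * b)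
    (f : K → K) (hf : ∀ x, f x = (x + a) / (b * x + c))
    (hD : (c - 1) ^ 2 + 4 * a * b = 0)
    (x₀ : K) (hx₀ : x₀ = (1 - c) / (2 * b))
    (α : ℝ) (hα : α = ‖(c + 1) / (2 * b)‖) :
    (∀ x : K, α < ‖x - x₀‖ → x ≠ -c / b ∧ ‖f x - x₀‖ = α) ∧
    (∀ x : K, ‖x - x₀‖ = α → x ≠ -c / b → α < ‖f x - x₀‖ →
      f x ≠ -c / b ∧ ‖f (f x) - x₀‖ = α) := by
  have : CharZero K := charZero_of_injective_algebraMap (algebraMap ℚ_[p] K).injective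
  have h2 : (2 : K) ≠ 0 := two_ne_zero
  have outside : ∀ x : K, α < ‖x - x₀‖ → x ≠ -c / b ∧ ‖f x - x₀‖ = α := by
    intro x hx
    have hpole : x ≠ -c / b := by
      rintro rfl
      have hdist : -c / b - x₀ = -((c + 1) / (2 * b)) := by
        rw [hx₀]
        field_simp
        ring
      rw [hdist, norm_neg, hα] at hx
      exact lt_irrefl _ hx
    have hden : b * x + c ≠ 0 := fun h ↦
      hpole ((eq_div_iff hb).2 (by linear_combination h))
    subst hx₀ hα
    rw [hf, linearFractional_sub_fixedPoint h2 hb hD hden]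
    exact ⟨hpole, norm_mul_div_add_eq_of_norm_lt hx⟩
  exact ⟨outside, fun x _ _ hx ↦ outside (f x) hx⟩
end

section
/- Suppose (c-1)² + 4ab ≠ 0, let x₁, x₂ ∈ ℂ_p be the two distinct fixed points of f (the roots of bx² + (c-1)x - a = 0), and set α₁ = |(1 - b x₁)/b|_p and β₁ = |(b x₁ + c)/b|_p. If α₁ < β₁, then for every x ∈ ℂ_p \ (𝒫_p ∪ {x₂}) one has lim_{n→∞} f^n(x) = x₁ (i.e. the basin of attraction of x₁ contains ℂ_p \ (𝒫_p ∪ {x₂})). -/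
/-- The coordinate `(x - x₁) / (x - x₂)` conjugates a Möbius map with distinct fixed points
`x₁, x₂` to multiplication by `(1 - b * x₁) / (1 - b * x₂)`. -/
theorem moebius_conj {K : Type*} [Field K] {a b c x₁ x₂ x : K}
    (hx₁ : b * x₁ ^ 2 + (c - 1) * x₁ - a = 0) (hx₂ : b * x₂ ^ 2 + (c - 1) * x₂ - a = 0)
    (h₂ : 1 - b * x₂ ≠ 0) (hx : b * x + c ≠ 0) (hxx₂ : x ≠ x₂) :
    (x + a) / (b * x + c) ≠ x₂ ∧
      ((x + a) / (b * x + c) - x₁) / ((x + a) / (b * x + c) - x₂) =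
        (1 - b * x₁) / (1 - b * x₂) * ((x - x₁) / (x - x₂)) := by
  have key : ∀ y, b * y ^ 2 + (c - 1) * y - a = 0 →
      (x + a) / (b * x + c) - y = (1 - b * y) * (x - y) / (b * x + c) := by
    intro y hy
    rw [eq_div_iff hx, sub_mul, div_mul_cancel₀ _ hx]
    linear_combination -hy
  have hs : x - x₂ ≠ 0 := sub_ne_zero.mpr hxx₂
  constructor
  · rw [← sub_ne_zero, key x₂ hx₂]
    exact div_ne_zero (mul_ne_zero h₂ hs) hx
  · rw [key x₁ hx₁, key x₂ hx₂, div_div_div_cancel_right₀ hx, mul_div_mul_comm]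

/-- `ℂ_p` is modelled as a complete, algebraically closed,
nontrivially normed ultrametric field `K` which is a normed `ℚ_[p]`-algebra; its norm
`‖·‖` plays the role of `|·|_p`. Fix `a b c ∈ K` with `b ≠ 0`, `c ≠ a*b`, let
`f x = (x+a)/(b*x+c)` (defined for `x ≠ x̂ = -c/b`) and
`𝒫_p = {x | ∃ n, f^[n] x = x̂}`. Suppose `(c-1)² + 4ab ≠ 0`, let `x₁ ≠ x₂` be the two
fixed points of `f` (roots of `bx² + (c-1)x - a = 0`), and set `α₁ = ‖(1-b*x₁)/b‖`,
`β₁ = ‖(b*x₁+c)/b‖`. If `α₁ < β₁`, then for every `x ∈ K \ (𝒫_p ∪ {x₂})` one has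
`f^[n] x → x₁` as `n → ∞`. -/
theorem stmt13 (p : ℕ) [Fact p.Prime] (K : Type*) [NontriviallyNormedField K]
    [IsUltrametricDist K] [IsAlgClosed K] [CompleteSpace K] [NormedAlgebra ℚ_[p] K]
    (a b c : K) (hb : b ≠ 0) (hc : c ≠ a * b)
    (f : K → K) (hf : ∀ x, f x = (x + a) / (b * x + c))
    (P : Set K) (hP : P = {x : K | ∃ n : ℕ, f^[n] x = -c / b})
    (hD : (c - 1) ^ 2 + 4 * a * b ≠ 0)
    (x₁ x₂ : K) (hx₁ : b * x₁ ^ 2 + (c - 1) * x₁ - a = 0)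
    (hx₂ : b * x₂ ^ 2 + (c - 1) * x₂ - a = 0) (hx12 : x₁ ≠ x₂)
    (α₁ β₁ : ℝ) (hα₁ : α₁ = ‖(1 - b * x₁) / b‖) (hβ₁ : β₁ = ‖(b * x₁ + c) / b‖)
    (hαβ : α₁ < β₁) :
    ∀ x : K, x ∉ P ∪ {x₂} →
      Filter.Tendsto (fun n : ℕ => f^[n] x) Filter.atTop (nhds x₁) := by
  intro x hx
  subst hP hα₁ hβ₁
  simp only [Set.mem_union, Set.mem_ofPred_eq, Set.mem_singleton_iff, not_or, not_exists] at hx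
  obtain ⟨hxP, hxx₂⟩ := hx
  have h12 : x₁ - x₂ ≠ 0 := sub_ne_zero.mpr hx12
  have vieta : b * x₁ + c = 1 - b * x₂ := by
    apply mul_left_cancel₀ h12
    linear_combination hx₁ - hx₂
  rw [vieta, norm_div, norm_div, div_lt_div_iff_of_pos_right (norm_pos_iff.mpr hb)] at hαβ
  have h₂pos : 0 < ‖1 - b * x₂‖ := (norm_nonneg _).trans_lt hαβ
  have h₂ : 1 - b * x₂ ≠ 0 := norm_pos_iff.mp h₂pos
  set r : K := (1 - b * x₁) / (1 - b * x₂) with hr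
  have hr1 : ‖r‖ < 1 := by
    rw [hr, norm_div]
    exact (div_lt_one h₂pos).mpr hαβ
  have hden : ∀ n : ℕ, b * f^[n] x + c ≠ 0 := by
    intro n h
    apply hxP n
    rw [eq_div_iff hb]
    linear_combination h
  have horbit : ∀ n : ℕ, f^[n] x ≠ x₂ ∧
      (f^[n] x - x₁) / (f^[n] x - x₂) = r ^ n * ((x - x₁) / (x - x₂)) := by
    intro n
    induction n with
    | zero => exact ⟨hxx₂, by simp⟩
    | succ n ih =>
      rw [Function.iterate_succ_apply', hf]
      obtain ⟨hne, heq⟩ := moebius_conj hx₁ hx₂ h₂ (hden n) ih.1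
      refine ⟨hne, ?_⟩
      rw [heq, ih.2, pow_succ', mul_assoc]
  set w : ℕ → K := fun n => r ^ n * ((x - x₁) / (x - x₂))
  have hw0 : Filter.Tendsto w Filter.atTop (nhds 0) := by
    simpa using (tendsto_pow_atTop_nhds_zero_of_norm_lt_one hr1).mul_const ((x - x₁) / (x - x₂))
  have hiter : ∀ n : ℕ, f^[n] x = (x₁ - w n * x₂) / (1 - w n) := by
    intro n
    obtain ⟨hne, heq⟩ := horbit n
    have hmul : f^[n] x - x₁ = w n * (f^[n] x - x₂) :=
      (div_eq_iff (sub_ne_zero.mpr hne)).mp heq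
    have hw1 : 1 - w n ≠ 0 := by
      intro h
      apply h12
      linear_combination -hmul + (f^[n] x - x₂) * h
    rw [eq_div_iff hw1]
    linear_combination hmul
  simp_rw [hiter]
  have hlim := (tendsto_const_nhds (x := x₁)).sub (hw0.mul_const x₂) |>.div
    (tendsto_const_nhds.sub hw0) (by simp : (1 : K) - 0 ≠ 0)
  rw [zero_mul, sub_zero, sub_zero, div_one] at hlim
  exact hlim
end

section
/- Suppose (c-1)² + 4ab ≠ 0, let x₁, x₂ ∈ ℂ_p be the two distinct fixed points of f (the roots of bx² + (c-1)x - a = 0), and set α₁ = |(1 - b x₁)/b|_p and β₁ = |(b x₁ + c)/b|_p. If α₁ > β₁, then for every x ∈ ℂ_p \ (𝒫_p ∪ {x₁}) the orbit eventually lies on the sphere S_{α₁}(x₁): there exists N such that |f^n(x) - x₁|_p = α₁ for all n ≥ N. -/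
/-- In an ultrametric field, an orbit of `y ↦ A * y / (y + B)` with `‖B‖ < ‖A‖` which starts
away from `0` and avoids the pole `-B` eventually lies on the sphere of radius `‖A‖`. -/
theorem eventually_norm_eq_of_mobius_orbit {K : Type*} [NormedField K] [IsUltrametricDist K]
    {A B : K} (hAB : ‖B‖ < ‖A‖) {y : ℕ → K} (hy₀ : y 0 ≠ 0) (hpole : ∀ n, y n + B ≠ 0)
    (hy : ∀ n, y (n + 1) = A * y n / (y n + B)) :
    ∃ N : ℕ, ∀ n : ℕ, N ≤ n → ‖y n‖ = ‖A‖ := by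
  have norm_succ {n : ℕ} (hn : ‖B‖ < ‖y n‖) : ‖y (n + 1)‖ = ‖A‖ := by
    have hpos : ‖y n‖ ≠ 0 := ((norm_nonneg B).trans_lt hn).ne'
    rw [hy, norm_div, norm_mul, IsUltrametricDist.norm_add_eq_max_of_norm_ne_norm hn.ne',
      max_eq_left hn.le, mul_div_cancel_right₀ _ hpos]
  obtain ⟨m, hm⟩ : ∃ m, ‖B‖ < ‖y m‖ := by
    by_contra! hle
    have hB : 0 < ‖B‖ := (norm_pos_iff.2 hy₀).trans_le (hle 0)
    have growth (n : ℕ) : (‖A‖ / ‖B‖) ^ n * ‖y 0‖ ≤ ‖y n‖ := by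
      induction n with
      | zero => simp
      | succ n ih =>
        have hden : ‖y n + B‖ ≤ ‖B‖ :=
          (IsUltrametricDist.norm_add_le_max _ _).trans (max_le (hle n) le_rfl)
        have hden_pos : 0 < ‖y n + B‖ := norm_pos_iff.2 (hpole n)
        calc (‖A‖ / ‖B‖) ^ (n + 1) * ‖y 0‖
            = ‖A‖ / ‖B‖ * ((‖A‖ / ‖B‖) ^ n * ‖y 0‖) := by ring
          _ ≤ ‖A‖ / ‖B‖ * ‖y n‖ := by gcongr
          _ ≤ ‖A‖ / ‖y n + B‖ * ‖y n‖ := by gcongr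
          _ = ‖y (n + 1)‖ := by rw [hy, norm_div, norm_mul]; ring
    obtain ⟨n, hn⟩ := pow_unbounded_of_one_lt (‖B‖ / ‖y 0‖) ((one_lt_div hB).2 hAB)
    rw [div_lt_iff₀ (norm_pos_iff.2 hy₀)] at hn
    exact absurd (hn.trans_le (growth n)) (hle n).not_gt
  refine ⟨m + 1, fun n hn => ?_⟩
  induction n, hn using Nat.le_induction with
  | base => exact norm_succ hm
  | succ n _ ih => exact norm_succ (hAB.trans_eq ih.symm)

/-- `ℂ_p` is modelled as a complete, algebraically closed,
nontrivially normed ultrametric field `K` which is a normed `ℚ_[p]`-algebra; its norm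
`‖·‖` plays the role of `|·|_p`. Fix `a b c ∈ K` with `b ≠ 0`, `c ≠ a*b`, let
`f x = (x+a)/(b*x+c)` (defined for `x ≠ x̂ = -c/b`) and
`𝒫_p = {x | ∃ n, f^[n] x = x̂}`. Suppose `(c-1)² + 4ab ≠ 0`, let `x₁ ≠ x₂` be the two
fixed points of `f` (roots of `bx² + (c-1)x - a = 0`), and set `α₁ = ‖(1-b*x₁)/b‖`,
`β₁ = ‖(b*x₁+c)/b‖`. If `α₁ > β₁`, then for every `x ∈ K \ (𝒫_p ∪ {x₁})` the orbit
eventually lies on the sphere `S_{α₁}(x₁)`: there exists `N` such that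
`‖f^[n] x - x₁‖ = α₁` for all `n ≥ N`. -/
theorem stmt14 (p : ℕ) [Fact p.Prime] (K : Type*) [NontriviallyNormedField K]
    [IsUltrametricDist K] [IsAlgClosed K] [CompleteSpace K] [NormedAlgebra ℚ_[p] K]
    (a b c : K) (hb : b ≠ 0) (hc : c ≠ a * b)
    (f : K → K) (hf : ∀ x, f x = (x + a) / (b * x + c))
    (P : Set K) (hP : P = {x : K | ∃ n : ℕ, f^[n] x = -c / b})
    (hD : (c - 1) ^ 2 + 4 * a * b ≠ 0)
    (x₁ x₂ : K) (hx₁ : b * x₁ ^ 2 + (c - 1) * x₁ - a = 0)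
    (hx₂ : b * x₂ ^ 2 + (c - 1) * x₂ - a = 0) (hx12 : x₁ ≠ x₂)
    (α₁ β₁ : ℝ) (hα₁ : α₁ = ‖(1 - b * x₁) / b‖) (hβ₁ : β₁ = ‖(b * x₁ + c) / b‖)
    (hαβ : β₁ < α₁) :
    ∀ x : K, x ∉ P ∪ {x₁} →
      ∃ N : ℕ, ∀ n : ℕ, N ≤ n → ‖f^[n] x - x₁‖ = α₁ := by
  intro x hx
  simp only [hP, Set.mem_union, Set.mem_ofPred_eq, Set.mem_singleton_iff, not_or, not_exists] at hx
  obtain ⟨hxP, hxx₁⟩ := hx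
  have hden (n : ℕ) : b * f^[n] x + c ≠ 0 := fun h =>
    hxP n (by rw [eq_div_iff hb]; linear_combination h)
  have hshift (n : ℕ) : f^[n] x - x₁ + (b * x₁ + c) / b = (b * f^[n] x + c) / b := by
    field_simp
    ring
  subst hα₁ hβ₁
  refine eventually_norm_eq_of_mobius_orbit (y := fun n => f^[n] x - x₁) hαβ
    (sub_ne_zero.2 hxx₁) (fun n => ?_) (fun n => ?_)
  · rw [hshift]
    exact div_ne_zero (hden n) hb
  · have hn := hden n
    simp only [hshift, Function.iterate_succ_apply', hf]
    rw [← mul_div_right_comm, div_div_div_cancel_right₀ hb, eq_div_iff hn, sub_mul,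
      div_mul_cancel₀ _ hn]
    linear_combination -hx₁
end

section
/- Let q ≥ 1. (1) If K_q(a,b,c) ≠ 0, then f has no q-periodic points in ℂ_p other than fixed points: if x ∈ ℂ_p is such that f(x), …, f^q(x) are all defined and f^q(x) = x, then f(x) = x. (2) If K_q(a,b,c) = 0, then f^q(x) = x for every x ∈ ℂ_p \ 𝒫_p. -/
/-- The iterates of the Möbius map `x ↦ (x + a) / (b * x + c)`, in terms of the sequence given by the
characteristic recurrence of its matrix. The denominator does not vanish as long as the orbit
avoids the pole. -/
theorem moebius_iterate_eq_div {F : Type*} [Field F] {a b c : F} (hb : b ≠ 0) {f : F → F}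
    (hf : ∀ x, f x = (x + a) / (b * x + c)) {k : ℕ → F} (hk0 : k 0 = 0) (hk1 : k 1 = 1)
    (hk : ∀ n, k (n + 2) = (c + 1) * k (n + 1) - (c - a * b) * k n) {x : F} {n : ℕ}
    (hx : ∀ i < n, f^[i] x ≠ -c / b) :
    k (n + 1) + k n * (b * x - 1) ≠ 0 ∧
      f^[n] x = (k (n + 1) * x + k n * (a - c * x)) / (k (n + 1) + k n * (b * x - 1)) := by
  induction n with
  | zero => simp [hk0, hk1]
  | succ n ih =>
    obtain ⟨hD, hn⟩ := ih fun i hi => hx i (by lia)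
    have hpole := hx n n.lt_succ_self
    have hden : k (n + 2) + k (n + 1) * (b * x - 1) =
        b * (k (n + 1) * x + k n * (a - c * x)) + c * (k (n + 1) + k n * (b * x - 1)) := by
      rw [hk]; ring
    have hnum : k (n + 2) * x + k (n + 1) * (a - c * x) =
        (k (n + 1) * x + k n * (a - c * x)) + a * (k (n + 1) + k n * (b * x - 1)) := by
      rw [hk]; ring
    rw [Function.iterate_succ_apply', hf, hn, hden, hnum]
    rw [hn] at hpole
    generalize k (n + 1) + k n * (b * x - 1) = D at *
    generalize k (n + 1) * x + k n * (a - c * x) = N at *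
    have hD' : b * N + c * D ≠ 0 := by
      intro h
      apply hpole
      rw [div_eq_div_iff hD hb]
      linear_combination h
    refine ⟨hD', ?_⟩
    have h1 : N / D + a = (N + a * D) / D := by field_simp
    have h2 : b * (N / D) + c = (b * N + c * D) / D := by field_simp
    rw [h1, h2, div_div_div_cancel_right₀ hD]

/-- `ℂ_p` is modelled as a complete, algebraically closed,
nontrivially normed ultrametric field `K` which is a normed `ℚ_[p]`-algebra. Fix
`a b c ∈ K` with `b ≠ 0`, `c ≠ a*b`, let `f x = (x+a)/(b*x+c)` (defined for
`x ≠ x̂ = -c/b`), `𝒫_p = {x | ∃ n, f^[n] x = x̂}`, and `Kseq` defined by `Kseq 1 = 1`,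
`Kseq 2 = 1+c`, `Kseq (q+2) = (c+1)*Kseq (q+1) - (c-ab)*Kseq q`. Let `q ≥ 1`.
(1) If `Kseq q ≠ 0`, then `f` has no `q`-periodic points other than fixed points:
if `x` is such that `f x, …, f^[q] x` are all defined and `f^[q] x = x`, then `f x = x`.
(2) If `Kseq q = 0`, then `f^[q] x = x` for every `x ∉ 𝒫_p`. -/
theorem stmt15 (p : ℕ) [Fact p.Prime] (K : Type*) [NontriviallyNormedField K]
    [IsUltrametricDist K] [IsAlgClosed K] [CompleteSpace K] [NormedAlgebra ℚ_[p] K]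
    (a b c : K) (hb : b ≠ 0) (hc : c ≠ a * b)
    (f : K → K) (hf : ∀ x, f x = (x + a) / (b * x + c))
    (P : Set K) (hP : P = {x : K | ∃ n : ℕ, f^[n] x = -c / b})
    (Kseq : ℕ → K) (hK1 : Kseq 1 = 1) (hK2 : Kseq 2 = 1 + c)
    (hKrec : ∀ q : ℕ, Kseq (q + 2) = (c + 1) * Kseq (q + 1) - (c - a * b) * Kseq q)
    (q : ℕ) (hq : 1 ≤ q) :
    (Kseq q ≠ 0 →
      ∀ x : K, (∀ i : ℕ, i < q → f^[i] x ≠ -c / b) → f^[q] x = x → f x = x) ∧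
    (Kseq q = 0 → ∀ x : K, x ∉ P → f^[q] x = x) := by
  have hK0 : Kseq 0 = 0 := by
    have h : (c - a * b) * Kseq 0 = 0 := by
      have h2 := hKrec 0
      rw [zero_add, zero_add, hK1, hK2] at h2
      linear_combination h2
    exact (mul_eq_zero.mp h).resolve_left (sub_ne_zero.mpr hc)
  refine ⟨fun hKq x hx hper => ?_, fun hKq x hx => ?_⟩
  · obtain ⟨hD, hiter⟩ := moebius_iterate_eq_div hb hf hK0 hK1 hKrec hx
    rw [hper, eq_div_iff hD] at hiter
    have hquad : x * (b * x + c) = x + a := mul_left_cancel₀ hKq (by linear_combination hiter)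
    have hden : b * x + c ≠ 0 := by
      intro h
      apply hx 0 (by lia)
      rw [Function.iterate_zero_apply, eq_div_iff hb]
      linear_combination h
    rw [hf, ← hquad, mul_div_cancel_right₀ _ hden]
  · obtain ⟨hD, hiter⟩ := moebius_iterate_eq_div (n := q) hb hf hK0 hK1 hKrec
      fun i _ hi => hx (hP ▸ ⟨i, hi⟩)
    rw [hiter, div_eq_iff hD, hKq]
    ring
end

section
/- Let s ∈ ℂ_p satisfy s² = c - ab, suppose |b|_p < |s|_p, let x₁, x₂ ∈ ℂ_p be the fixed points of f (the roots of bx² + (c-1)x - a = 0), and suppose |f′(x_i)|_p = |(c-ab)/(bx_i + c)²|_p = 1 for i = 1, 2. Then for each i ∈ {1,2} the maximal Siegel disk of f at x_i is the open ball of radius |s/b|_p: (i) for every ρ with 0 < ρ < |s/b|_p and every x with |x - x_i|_p = ρ, the whole forward orbit of x is defined and |f^n(x) - x_i|_p = ρ for all n ≥ 1; (ii) the sphere S_{|s/b|_p}(x_i) is not invariant under f (indeed |x̂ - x_i|_p = |s/b|_p, so f is undefined at a point of this sphere). -/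
section MoebiusFixedPoint

variable {K : Type*} [NormedField K] {a b c s z : K}

/-- At a fixed point `z` of `x ↦ (x + a) / (b * x + c)` with multiplier of norm `1`, the
denominator has the norm of a square root of the determinant. -/
theorem norm_denom_eq_of_norm_multiplier_eq_one (hs : s ^ 2 = c - a * b)
    (hder : ‖(c - a * b) / (b * z + c) ^ 2‖ = 1) : ‖b * z + c‖ = ‖s‖ := by
  rw [← hs, norm_div, norm_pow, norm_pow] at hder
  have h : ‖s‖ ^ 2 = ‖b * z + c‖ ^ 2 := eq_of_div_eq_one hder
  exact ((pow_left_inj₀ (norm_nonneg _) (norm_nonneg _) two_ne_zero).1 h).symm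

theorem norm_pole_sub_eq (hb : b ≠ 0) (hD : ‖b * z + c‖ = ‖s‖) :
    ‖-c / b - z‖ = ‖s / b‖ := by
  have h : -c / b - z = -((b * z + c) / b) := by
    field_simp
    ring
  rw [h, norm_neg, norm_div, norm_div, hD]

/-- Spheres of radius less than `‖s / b‖` around an indifferent fixed point are invariant. -/
theorem norm_moebius_sub_fixedPoint [IsUltrametricDist K] (hb : b ≠ 0) (hs0 : s ≠ 0)
    (hs : s ^ 2 = c - a * b) (hz : b * z ^ 2 + (c - 1) * z - a = 0)
    (hD : ‖b * z + c‖ = ‖s‖) {x : K} (hx : ‖x - z‖ < ‖s / b‖) :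
    ‖(x + a) / (b * x + c) - z‖ = ‖x - z‖ := by
  have hs0' : ‖s‖ ≠ 0 := norm_ne_zero_iff.2 hs0
  have hlt : ‖b * (x - z)‖ < ‖b * z + c‖ := by
    rw [norm_div, lt_div_iff₀ (norm_pos_iff.2 hb)] at hx
    rwa [norm_mul, hD, mul_comm]
  have hden : ‖b * x + c‖ = ‖s‖ := by
    have h : b * x + c = b * (x - z) + (b * z + c) := by ring
    rw [h, IsUltrametricDist.norm_add_eq_max_of_norm_ne_norm hlt.ne, max_eq_right hlt.le, hD]
  have hden0 : b * x + c ≠ 0 := norm_ne_zero_iff.1 (hden ▸ hs0')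
  have hnum : ‖1 - b * z‖ = ‖s‖ := by
    have h : (b * z + c) * (1 - b * z) = s ^ 2 := by linear_combination (-b) * hz - hs
    have h' := congrArg norm h
    rw [norm_mul, norm_pow, hD, sq] at h'
    exact mul_left_cancel₀ hs0' h'
  have h : (x + a) / (b * x + c) - z = (x - z) * (1 - b * z) / (b * x + c) := by
    rw [eq_div_iff hden0, sub_mul, div_mul_cancel₀ _ hden0]
    linear_combination -hz
  rw [h, norm_div, norm_mul, hnum, hden, mul_div_cancel_right₀ _ hs0']

end MoebiusFixedPoint

/-- `ℂ_p` is modelled as a complete, algebraically closed,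
nontrivially normed ultrametric field `K` which is a normed `ℚ_[p]`-algebra; its norm
`‖·‖` plays the role of `|·|_p`. Fix `a b c ∈ K` with `b ≠ 0`, `c ≠ a*b`, and let
`f x = (x+a)/(b*x+c)` (defined for `x ≠ x̂ = -c/b`). Let `s` satisfy `s² = c - ab`,
suppose `‖b‖ < ‖s‖`, let `x₁, x₂` be the fixed points of `f` (roots of
`bx² + (c-1)x - a = 0`), and suppose `|f'(xᵢ)|_p = ‖(c-ab)/(b*xᵢ+c)²‖ = 1` for
`i = 1, 2`. Then for each `i` the maximal Siegel disk of `f` at `xᵢ` is the open ball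
of radius `‖s/b‖`:
(i) for every `ρ` with `0 < ρ < ‖s/b‖` and every `x` with `‖x - xᵢ‖ = ρ`, the whole
forward orbit of `x` is defined and `‖f^[n] x - xᵢ‖ = ρ` for all `n ≥ 1`;
(ii) the sphere `S_{‖s/b‖}(xᵢ)` is not invariant: `‖x̂ - xᵢ‖ = ‖s/b‖`, so `f` is
undefined at a point of this sphere. -/
theorem stmt16 (p : ℕ) [Fact p.Prime] (K : Type*) [NontriviallyNormedField K]
    [IsUltrametricDist K] [IsAlgClosed K] [CompleteSpace K] [NormedAlgebra ℚ_[p] K]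
    (a b c : K) (hb : b ≠ 0) (hc : c ≠ a * b)
    (f : K → K) (hf : ∀ x, f x = (x + a) / (b * x + c))
    (s : K) (hs : s ^ 2 = c - a * b) (hbs : ‖b‖ < ‖s‖)
    (x₁ x₂ : K) (hx₁ : b * x₁ ^ 2 + (c - 1) * x₁ - a = 0)
    (hx₂ : b * x₂ ^ 2 + (c - 1) * x₂ - a = 0)
    (hder₁ : ‖(c - a * b) / (b * x₁ + c) ^ 2‖ = 1)
    (hder₂ : ‖(c - a * b) / (b * x₂ + c) ^ 2‖ = 1) :
    ∀ xi : K, (xi = x₁ ∨ xi = x₂) →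
      ((∀ ρ : ℝ, 0 < ρ → ρ < ‖s / b‖ → ∀ x : K, ‖x - xi‖ = ρ →
          (∀ n : ℕ, f^[n] x ≠ -c / b) ∧ (∀ n : ℕ, 1 ≤ n → ‖f^[n] x - xi‖ = ρ)) ∧
       ‖-c / b - xi‖ = ‖s / b‖) := by
  intro xi hxi
  have hfix : b * xi ^ 2 + (c - 1) * xi - a = 0 := by rcases hxi with rfl | rfl <;> assumption
  have hder : ‖(c - a * b) / (b * xi + c) ^ 2‖ = 1 := by rcases hxi with rfl | rfl <;> assumption
  have hs0 : s ≠ 0 := norm_pos_iff.1 ((norm_nonneg b).trans_lt hbs)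
  have hD : ‖b * xi + c‖ = ‖s‖ := norm_denom_eq_of_norm_multiplier_eq_one hs hder
  have hpole : ‖-c / b - xi‖ = ‖s / b‖ := norm_pole_sub_eq hb hD
  refine ⟨fun ρ _ hρ x hx => ?_, hpole⟩
  have key : ∀ n : ℕ, ‖f^[n] x - xi‖ = ρ := by
    intro n
    induction n with
    | zero => exact hx
    | succ n ih =>
      rw [Function.iterate_succ_apply', hf,
        norm_moebius_sub_fixedPoint hb hs0 hs hfix hD (ih.trans_lt hρ), ih]
  refine ⟨fun n hn => ?_, fun n _ => key n⟩
  have h := key n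
  rw [hn, hpole] at h
  exact hρ.ne' h
end

section
/- Let x₁ ∈ ℂ_p be a fixed point of f and suppose |(c-ab)/(bx₁ + c)²|_p < 1 and |b/(bx₁ + c)|_p < 1. Then every x ∈ ℂ_p with |x - x₁|_p ≠ |(bx₁ + c)/b|_p lies in the basin of attraction of x₁: the whole forward orbit of x under f is well defined (never hits x̂) and lim_{n→∞} f^n(x) = x₁. -/
section MoebiusFixedPoint

variable {K : Type*} [NormedField K] {a b c x₁ x : K}

/-- At a fixed point, the denominator of a nondegenerate map `x ↦ (x + a) / (b * x + c)`
does not vanish. -/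
lemma denom_ne_zero_of_fixed (hc : c ≠ a * b) (hx₁ : b * x₁ ^ 2 + (c - 1) * x₁ - a = 0) :
    b * x₁ + c ≠ 0 := by
  intro h
  exact hc (by linear_combination (1 - b * x₁) * h + b * hx₁)

/-- Displacement from a fixed point, with the multiplier factored out. -/
lemma moebius_sub_fixed (hx₁ : b * x₁ ^ 2 + (c - 1) * x₁ - a = 0)
    (hD : b * x₁ + c ≠ 0) (hx : b * x + c ≠ 0) :
    (x + a) / (b * x + c) - x₁ =
      (c - a * b) / (b * x₁ + c) ^ 2 * ((b * x₁ + c) * (x - x₁) / (b * x + c)) := by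
  have hmul : c - a * b = (1 - b * x₁) * (b * x₁ + c) := by
    linear_combination b * hx₁
  have hrhs : (c - a * b) / (b * x₁ + c) ^ 2 * ((b * x₁ + c) * (x - x₁) / (b * x + c)) =
      (1 - b * x₁) * (x - x₁) / (b * x + c) := by
    rw [hmul]
    field_simp
  rw [hrhs, div_sub' hx]
  congr 1
  linear_combination -hx₁

variable [IsUltrametricDist K]

lemma norm_denom_of_lt (hb : b ≠ 0) (hx : ‖x - x₁‖ < ‖(b * x₁ + c) / b‖) :
    ‖b * x + c‖ = ‖b * x₁ + c‖ := by
  have hlt : ‖b * (x - x₁)‖ < ‖b * x₁ + c‖ := by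
    rwa [norm_div, lt_div_iff₀ (norm_pos_iff.mpr hb), mul_comm, ← norm_mul] at hx
  rw [show b * x + c = (b * x₁ + c) + b * (x - x₁) by ring,
    IsUltrametricDist.norm_add_eq_max_of_norm_ne_norm hlt.ne', max_eq_left hlt.le]

lemma norm_denom_of_gt (hb : b ≠ 0) (hx : ‖(b * x₁ + c) / b‖ < ‖x - x₁‖) :
    ‖b * x + c‖ = ‖b * (x - x₁)‖ := by
  have hlt : ‖b * x₁ + c‖ < ‖b * (x - x₁)‖ := by
    rwa [norm_div, div_lt_iff₀ (norm_pos_iff.mpr hb), mul_comm ‖x - x₁‖, ← norm_mul] at hx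
  rw [show b * x + c = (b * x₁ + c) + b * (x - x₁) by ring,
    IsUltrametricDist.norm_add_eq_max_of_norm_ne_norm hlt.ne, max_eq_right hlt.le]

/-- Inside the critical radius the map scales the distance to the fixed point by the multiplier. -/
lemma norm_moebius_sub_fixed_of_lt (hb : b ≠ 0) (hx₁ : b * x₁ ^ 2 + (c - 1) * x₁ - a = 0)
    (hD : b * x₁ + c ≠ 0) (hx : ‖x - x₁‖ < ‖(b * x₁ + c) / b‖) :
    ‖(x + a) / (b * x + c) - x₁‖ = ‖(c - a * b) / (b * x₁ + c) ^ 2‖ * ‖x - x₁‖ := by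
  have hn := norm_denom_of_lt hb hx
  have hne : b * x + c ≠ 0 := norm_ne_zero_iff.mp (hn ▸ norm_ne_zero_iff.mpr hD)
  rw [moebius_sub_fixed hx₁ hD hne, norm_mul, norm_div (_ * _), norm_mul (b * x₁ + c), hn,
    mul_div_cancel_left₀ _ (norm_ne_zero_iff.mpr hD)]

/-- Outside the critical radius `r` the map sends every point to distance `‖multiplier‖ * r`
from the fixed point. -/
lemma norm_moebius_sub_fixed_of_gt (hb : b ≠ 0) (hx₁ : b * x₁ ^ 2 + (c - 1) * x₁ - a = 0)
    (hD : b * x₁ + c ≠ 0) (hx : ‖(b * x₁ + c) / b‖ < ‖x - x₁‖) :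
    ‖(x + a) / (b * x + c) - x₁‖ =
      ‖(c - a * b) / (b * x₁ + c) ^ 2‖ * ‖(b * x₁ + c) / b‖ := by
  have hn := norm_denom_of_gt hb hx
  have hy : x - x₁ ≠ 0 := norm_pos_iff.mp ((norm_nonneg _).trans_lt hx)
  have hne : b * x + c ≠ 0 :=
    norm_ne_zero_iff.mp (hn ▸ norm_ne_zero_iff.mpr (mul_ne_zero hb hy))
  rw [moebius_sub_fixed hx₁ hD hne, norm_mul, norm_div (_ * _), hn, ← norm_div,
    mul_div_mul_right _ _ hy]

end MoebiusFixedPoint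

/-- If `f` contracts distances to `x₁` by a factor `q < 1` on the ball of radius `r`, then orbits
starting in the ball stay in it and converge to `x₁`. -/
lemma iterate_lt_and_tendsto_of_contracts {E : Type*} [SeminormedAddCommGroup E] {f : E → E}
    {x₁ x : E} {q r : ℝ} (hq₀ : 0 ≤ q) (hq : q < 1)
    (hf : ∀ y, ‖y - x₁‖ < r → ‖f y - x₁‖ ≤ q * ‖y - x₁‖) (hx : ‖x - x₁‖ < r) :
    (∀ n : ℕ, ‖f^[n] x - x₁‖ < r) ∧
      Filter.Tendsto (fun n : ℕ => f^[n] x) Filter.atTop (nhds x₁) := by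
  have hlt : ∀ n : ℕ, ‖f^[n] x - x₁‖ < r := by
    intro n
    induction n with
    | zero => exact hx
    | succ n ih =>
      rw [Function.iterate_succ_apply']
      exact ((hf _ ih).trans (mul_le_of_le_one_left (norm_nonneg _) hq.le)).trans_lt ih
  have hle : ∀ n : ℕ, ‖f^[n] x - x₁‖ ≤ q ^ n * ‖x - x₁‖ := by
    intro n
    induction n with
    | zero => simp
    | succ n ih =>
      rw [Function.iterate_succ_apply', pow_succ', mul_assoc]
      exact (hf _ (hlt n)).trans (mul_le_mul_of_nonneg_left ih hq₀)
  refine ⟨hlt, tendsto_iff_norm_sub_tendsto_zero.mpr ?_⟩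
  refine squeeze_zero (fun _ => norm_nonneg _) hle ?_
  simpa using (tendsto_pow_atTop_nhds_zero_of_lt_one hq₀ hq).mul_const ‖x - x₁‖

/-- `ℂ_p` is modelled as a complete, algebraically closed,
nontrivially normed ultrametric field `K` which is a normed `ℚ_[p]`-algebra; its norm
`‖·‖` plays the role of `|·|_p`. Fix `a b c ∈ K` with `b ≠ 0`, `c ≠ a*b`, and let
`f x = (x+a)/(b*x+c)` (defined for `x ≠ x̂ = -c/b`). Let `x₁` be a fixed point of `f`
and suppose `‖(c-ab)/(b*x₁+c)²‖ < 1` and `‖b/(b*x₁+c)‖ < 1`. Then every `x` with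
`‖x - x₁‖ ≠ ‖(b*x₁+c)/b‖` lies in the basin of attraction of `x₁`: the whole forward
orbit of `x` is well defined (never hits `x̂`) and `f^[n] x → x₁` as `n → ∞`. -/
theorem stmt18 (p : ℕ) [Fact p.Prime] (K : Type*) [NontriviallyNormedField K]
    [IsUltrametricDist K] [IsAlgClosed K] [CompleteSpace K] [NormedAlgebra ℚ_[p] K]
    (a b c : K) (hb : b ≠ 0) (hc : c ≠ a * b)
    (f : K → K) (hf : ∀ x, f x = (x + a) / (b * x + c))
    (x₁ : K) (hx₁ : b * x₁ ^ 2 + (c - 1) * x₁ - a = 0)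
    (hder : ‖(c - a * b) / (b * x₁ + c) ^ 2‖ < 1)
    (hbb : ‖b / (b * x₁ + c)‖ < 1) :
    ∀ x : K, ‖x - x₁‖ ≠ ‖(b * x₁ + c) / b‖ →
      (∀ n : ℕ, f^[n] x ≠ -c / b) ∧
      Filter.Tendsto (fun n : ℕ => f^[n] x) Filter.atTop (nhds x₁) := by
  intro x hx
  have hD := denom_ne_zero_of_fixed hc hx₁
  have hr : 0 < ‖(b * x₁ + c) / b‖ := norm_pos_iff.mpr (div_ne_zero hD hb)
  have hpole : ‖-c / b - x₁‖ = ‖(b * x₁ + c) / b‖ := by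
    rw [← norm_neg]
    congr 1
    field_simp
    ring
  have hin : ∀ y, ‖y - x₁‖ < ‖(b * x₁ + c) / b‖ →
      (∀ n : ℕ, ‖f^[n] y - x₁‖ < ‖(b * x₁ + c) / b‖) ∧
        Filter.Tendsto (fun n : ℕ => f^[n] y) Filter.atTop (nhds x₁) := fun y hy =>
    iterate_lt_and_tendsto_of_contracts (norm_nonneg _) hder
      (fun z hz => by rw [hf]; exact (norm_moebius_sub_fixed_of_lt hb hx₁ hD hz).le) hy
  have hfx : ‖f x - x₁‖ < ‖(b * x₁ + c) / b‖ := by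
    rw [hf]
    rcases lt_or_gt_of_ne hx with h | h
    · rw [norm_moebius_sub_fixed_of_lt hb hx₁ hD h]
      exact (mul_le_of_le_one_left (norm_nonneg _) hder.le).trans_lt h
    · rw [norm_moebius_sub_fixed_of_gt hb hx₁ hD h]
      exact mul_lt_of_lt_one_left hr hder
  obtain ⟨hlt, hlim⟩ := hin (f x) hfx
  refine ⟨fun n hn => ?_, (Filter.tendsto_add_atTop_iff_nat 1).mp hlim⟩
  rw [← hpole, ← hn] at hx hlt
  cases n with
  | zero => exact hx rfl
  | succ n => exact (hlt n).ne rfl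
end

section
/- Let s ∈ ℂ_p with s ≠ 0 and s² = (c-1)² + 4ab, and set α = (1+c+s)/2, β = (1+c-s)/2, x₁ = (1-c+s)/(2b), x₂ = (1-c-s)/(2b) (so x₁, x₂ are the two distinct fixed points of f). Suppose |α|_p ≠ |β|_p. Then for every x ∈ ℂ_p \ ({x₁, x₂} ∪ 𝒫_p): lim_{n→∞} f^n(x) = x₂ if |α|_p < |β|_p, and lim_{n→∞} f^n(x) = x₁ if |α|_p > |β|_p. -/
open Filter Topology in
/-- If each step of a sequence multiplies its differences from two distinct points `u`, `v` by `μ`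
and `l` respectively, up to a common nonzero factor, and `‖μ‖ < ‖l‖`, then it tends to `u`. -/
theorem tendsto_of_sub_mul_eq_s19 {K : Type*} [NormedField K] {u v l μ : K} {y d : ℕ → K}
    (huv : u ≠ v) (hlt : ‖μ‖ < ‖l‖) (hd : ∀ n, d n ≠ 0)
    (hu : ∀ n, (y (n + 1) - u) * d n = μ * (y n - u))
    (hv : ∀ n, (y (n + 1) - v) * d n = l * (y n - v)) (h0 : y 0 ≠ v) :
    Tendsto y atTop (𝓝 u) := by
  have hl : l ≠ 0 := norm_pos_iff.mp ((norm_nonneg μ).trans_lt hlt)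
  have hyv : ∀ n, y n - v ≠ 0 := by
    intro n
    induction n with
    | zero => exact sub_ne_zero.mpr h0
    | succ n ih =>
      intro h
      have := hv n
      rw [h, zero_mul] at this
      exact mul_ne_zero hl ih this.symm
  have hw : ∀ n, (y n - u) / (y n - v) = (μ / l) ^ n * ((y 0 - u) / (y 0 - v)) := by
    intro n
    induction n with
    | zero => simp
    | succ n ih =>
      rw [pow_succ', mul_assoc, ← ih, ← mul_div_mul_right _ _ (hd n), hu, hv, mul_div_mul_comm]
  have hq : ‖μ / l‖ < 1 := by
    rw [norm_div]
    exact (div_lt_one (norm_pos_iff.mpr hl)).mpr hlt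
  have hw0 : Tendsto (fun n => (y n - u) / (y n - v)) atTop (𝓝 0) := by
    rw [funext hw]
    simpa using (tendsto_pow_atTop_nhds_zero_of_norm_lt_one hq).mul_const _
  have hy : y = fun n => v + (u - v) / (1 - (y n - u) / (y n - v)) := by
    funext n
    have h1 : 1 - (y n - u) / (y n - v) = (u - v) / (y n - v) := by
      rw [eq_div_iff (hyv n), sub_mul, div_mul_cancel₀ _ (hyv n)]
      ring
    rw [h1, div_div_cancel₀ (sub_ne_zero.mpr huv)]
    ring
  rw [hy]
  have h1 : Tendsto (fun n => 1 - (y n - u) / (y n - v)) atTop (𝓝 (1 - 0)) :=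
    tendsto_const_nhds.sub hw0
  have h2 : Tendsto (fun n => v + (u - v) / (1 - (y n - u) / (y n - v))) atTop
      (𝓝 (v + (u - v) / (1 - 0))) :=
    tendsto_const_nhds.add (tendsto_const_nhds.div h1 (by simp))
  simpa using h2

/-- `ℂ_p` is modelled as a complete, algebraically closed,
nontrivially normed ultrametric field `K` which is a normed `ℚ_[p]`-algebra; its norm
`‖·‖` plays the role of `|·|_p`. Fix `a b c ∈ K` with `b ≠ 0`, `c ≠ a*b`, let
`f x = (x+a)/(b*x+c)` (defined for `x ≠ x̂ = -c/b`) and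
`𝒫_p = {x | ∃ n, f^[n] x = x̂}`. Let `s ≠ 0` with `s² = (c-1)² + 4ab`, and set
`α = (1+c+s)/2`, `β = (1+c-s)/2`, `x₁ = (1-c+s)/(2b)`, `x₂ = (1-c-s)/(2b)` (so
`x₁, x₂` are the two distinct fixed points of `f`). Suppose `‖α‖ ≠ ‖β‖`. Then for
every `x ∈ K \ ({x₁, x₂} ∪ 𝒫_p)`: `f^[n] x → x₂` if `‖α‖ < ‖β‖`, and `f^[n] x → x₁`
if `‖α‖ > ‖β‖`. -/
theorem stmt19 (p : ℕ) [Fact p.Prime] (K : Type*) [NontriviallyNormedField K]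
    [IsUltrametricDist K] [IsAlgClosed K] [CompleteSpace K] [NormedAlgebra ℚ_[p] K]
    (a b c : K) (hb : b ≠ 0) (hc : c ≠ a * b)
    (f : K → K) (hf : ∀ x, f x = (x + a) / (b * x + c))
    (P : Set K) (hP : P = {x : K | ∃ n : ℕ, f^[n] x = -c / b})
    (s : K) (hs0 : s ≠ 0) (hs : s ^ 2 = (c - 1) ^ 2 + 4 * a * b)
    (α β x₁ x₂ : K)
    (hα : α = (1 + c + s) / 2) (hβ : β = (1 + c - s) / 2)
    (hx₁ : x₁ = (1 - c + s) / (2 * b)) (hx₂ : x₂ = (1 - c - s) / (2 * b))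
    (hαβ : ‖α‖ ≠ ‖β‖) :
    ∀ x : K, x ∉ ({x₁, x₂} : Set K) ∪ P →
      (‖α‖ < ‖β‖ → Filter.Tendsto (fun n : ℕ => f^[n] x) Filter.atTop (nhds x₂)) ∧
      (‖β‖ < ‖α‖ → Filter.Tendsto (fun n : ℕ => f^[n] x) Filter.atTop (nhds x₁)) := by
  intro x hx
  have : CharZero K := charZero_of_injective_algebraMap (algebraMap ℚ_[p] K).injective
  have h2 : (2 : K) ≠ 0 := two_ne_zero
  simp only [Set.mem_union, Set.mem_insert_iff, Set.mem_singleton_iff, not_or] at hx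
  obtain ⟨⟨hxx₁, hxx₂⟩, hxP⟩ := hx
  have hd : ∀ n, b * f^[n] x + c ≠ 0 := by
    intro n h
    refine hxP (hP ▸ ⟨n, ?_⟩)
    rw [eq_div_iff hb]
    linear_combination h
  have hbx₁ : 2 * (b * x₁) = 1 - c + s := by
    rw [hx₁]
    field_simp
  have hbx₂ : 2 * (b * x₂) = 1 - c - s := by
    rw [hx₂]
    field_simp
  have hne : x₁ ≠ x₂ := by
    rintro h
    rw [h, hbx₂] at hbx₁
    refine mul_ne_zero h2 hs0 ?_
    linear_combination -hbx₁
  have hα2 : 2 * α = 1 + c + s := by rw [hα, mul_div_cancel₀ _ h2]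
  have hβ2 : 2 * β = 1 + c - s := by rw [hβ, mul_div_cancel₀ _ h2]
  have h4b : 4 * b ≠ 0 := mul_ne_zero (by norm_num) hb
  have hstep : ∀ n, f^[n + 1] x * (b * f^[n] x + c) = f^[n] x + a := by
    intro n
    rw [Function.iterate_succ_apply', hf, div_mul_cancel₀ _ (hd n)]
  have h₁ : ∀ n, (f^[n + 1] x - x₁) * (b * f^[n] x + c) = β * (f^[n] x - x₁) := by
    intro n
    apply mul_left_cancel₀ h4b
    linear_combination 4 * b * hstep n - 2 * b * (f^[n] x - x₁) * hβ2
      - 2 * b * f^[n] x * hbx₁ + (1 - c - s) * hbx₁ - hs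
  have h₂ : ∀ n, (f^[n + 1] x - x₂) * (b * f^[n] x + c) = α * (f^[n] x - x₂) := by
    intro n
    apply mul_left_cancel₀ h4b
    linear_combination 4 * b * hstep n - 2 * b * (f^[n] x - x₂) * hα2
      - 2 * b * f^[n] x * hbx₂ + (1 - c + s) * hbx₂ - hs
  exact ⟨fun h => tendsto_of_sub_mul_eq_s19 hne.symm h hd h₂ h₁ hxx₁,
    fun h => tendsto_of_sub_mul_eq_s19 hne h hd h₁ h₂ hxx₂⟩
end
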